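/- Let K be an imaginary quadratic field with discriminant Δ_K, and let a, q be nonzero ideals of O_K, α ∈ O_K, with a + q = O_K and αO_K + q = O_K. Then for every ε > 0 and all t ≥ 0: ∑_{ρ mod q, ρ coprime to q} #{z ∈ a : z ≡ αρ² (mod q), |z|² ≤ t} = (2π φ*_K(q) / (√|Δ_K| · N(a))) · t + O_ε((t/N(a))^{1/3} N(q)^{1/3+ε} + 2^{ω_K(q)} N(q)^{1/2}), where φ*_K(q) = φ_K(q)/N(q) with φ_K Euler's function on ideals of O_K, and ω_K(q) the number of distinct prime ideals dividing q. -/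

import Mathlib

/-!
The sum counts points of the translates `e * α * ρ² + a * q` of the planar lattice `a * q` in a
disc of radius `R = √t`, where `e ∈ a` is congruent to `1` modulo `q`. Write `x = t / N(a)` and
`Q = N(q)`.

*Smoothing.* The indicator of the disc is averaged over a disc of radius `δ` (`smoothDisc`). The
count lies between the smoothed counts of radii `R - δ` and `R + δ`. The Fourier transform of the
disc of radius `r` decays like `r ^ (1/2) * ‖w‖ ^ (-3/2)`: it is the transform of the chord length
`2 √(r² - s²)`, and comparing the chord with its translates by half a period gives the bound
(`norm_integral_chord_le`). Averaging contributes a second factor of decay once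
`δ * ‖w‖ ≥ 1` (`norm_fourier_smoothDisc_le`).

*Poisson summation* over `a * q` (`poisson_lattice`, derived from Fourier series on the torus)
gives the main term at frequency `0`. At a frequency `w ≠ 0` of the dual lattice the sum over `ρ`
is an exponential sum `∑ ψ (α ρ²)` for an additive character `ψ` of `𝓞 K ⧸ q` (`exists_char`).

*Exponential sums.* If `d` is the conductor of `ψ`, then
`|∑ ψ (α ρ²)| ≪ Q * N(d) ^ (-1/2) * Q ^ ε` (`norm_squareSum_le_of_conductor`). The sum is unchanged
when `ψ` is twisted by the square of a unit, so its absolute square, multiplied by the number of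
distinct twists, is at most the complete second moment over all characters. That moment counts the solutions
of `u² = v²`, and `card_sqrt_one_le` bounds the number of square roots of one by a constant times
`2 ^ ω(q)`. The divisor bound `numDiv_le` absorbs all such factors.

*Sum over frequencies.* The frequencies of conductor containing `d` form a lattice which pairs
integrally with `a * d`. A short vector of `a * d` (Minkowski) embeds it in `ℤ²` with control on
norms, which gives `∑ ‖w‖ ^ (-3/2) * min 1 ((δ ‖w‖) ^ (-3/2)) ≪ N(a) * N(d) * δ ^ (-1/2)`
(`sum_decay_freq_le`). Summing over the divisors `d` of `q`, the smoothed count has error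
`≪ (r / δ) ^ (1/2) * Q ^ (1/2 + ε)` (`smooth_count`).

*Choice of `δ`.* For `x > Q ^ (1/2)`, the width `δ = N(a) ^ (1/2) * Q ^ (1/3) * x ^ (-1/6)` is
smaller than `R` and makes both this error and the change `R * δ / N(a)` of the main term equal to
`x ^ (1/3) * Q ^ (1/3)`, up to `Q ^ ε`. For `x ≤ Q ^ (1/2)` each of the `≪ 1 + x` points of `a` in
the disc is counted `≪ 2 ^ ω(q)` times, which is within the second error term.
-/

open NumberField
open scoped nonZeroDivisors Classical

/-- Number of distinct prime ideal divisors of an ideal of `𝓞 K`. -/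
noncomputable def omegaI {K : Type*} [Field K] [NumberField K] (I : Ideal (𝓞 K)) : ℕ :=
  (UniqueFactorizationMonoid.factors I).toFinset.card

set_option synthInstance.maxHeartbeats 800000

/-! ### Fourier transform of the chord length of a disc -/

namespace QCircle

section DiscFourier
open MeasureTheory Complex FourierTransform

/-- Length of the vertical chord at abscissa `s` of the disc of radius `r` centred at `0`;
it vanishes for `|s| ≥ r` because `Real.sqrt` is zero on negative numbers. -/
noncomputable def chord (r s : ℝ) : ℝ := 2 * √(r ^ 2 - s ^ 2)

lemma chord_nonneg (r s : ℝ) : 0 ≤ chord r s := by unfold chord; positivity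

lemma chord_eq_zero {r s : ℝ} (h : r ^ 2 ≤ s ^ 2) : chord r s = 0 := by
  unfold chord; rw [Real.sqrt_eq_zero_of_nonpos (by linarith), mul_zero]

lemma chord_neg (r s : ℝ) : chord r (-s) = chord r s := by simp [chord]

lemma continuous_chord (r : ℝ) : Continuous (chord r) := by unfold chord; fun_prop

lemma hasCompactSupport_chord (r : ℝ) (hr : 0 < r) : HasCompactSupport (chord r) := by
  apply HasCompactSupport.intro (isCompact_Icc (a := -r) (b := r))
  intro x hx
  apply chord_eq_zero
  by_contra hlt
  push Not at hlt
  exact hx (abs_le.mp (abs_le_of_sq_le_sq hlt.le hr.le))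

lemma integrable_chord (r : ℝ) (hr : 0 < r) : Integrable (chord r) :=
  (continuous_chord r).integrable_of_hasCompactSupport (hasCompactSupport_chord r hr)

lemma chord_edge {r h s : ℝ} (hr : 0 < r) (hh : 0 < h) (hs : r - 2 * h ≤ s) :
    chord r s ≤ 4 * √(r * h) := by
  by_cases h1 : r ^ 2 ≤ s ^ 2
  · rw [chord_eq_zero h1]; positivity
  push Not at h1
  have h2 := abs_lt.mp (abs_lt_of_sq_lt_sq h1 hr.le)
  have : √(r ^ 2 - s ^ 2) ≤ 2 * √(r * h) := by
    apply Real.sqrt_le_iff.mpr ⟨by positivity, ?_⟩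
    rw [mul_pow, Real.sq_sqrt (by positivity)]
    nlinarith
  unfold chord; linarith

/-- Negative of the second difference of `chord r` with step `h`. -/
noncomputable def chordDiff (r h s : ℝ) : ℝ := 2 * chord r s - chord r (s + h) - chord r (s - h)

/-- Concavity: inside the interval the second difference has a sign. -/
lemma chordDiff_nonneg {r h s : ℝ} (hh : 0 < h) (h1 : s ≤ r - h) (h2 : -(r - h) ≤ s) :
    0 ≤ chordDiff r h s := by
  unfold chordDiff chord
  set a := r ^ 2 - (s + h) ^ 2 with ha
  set b := r ^ 2 - (s - h) ^ 2 with hb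
  have ha0 : 0 ≤ a := by nlinarith
  have hb0 : 0 ≤ b := by nlinarith
  have hc0 : 0 ≤ r ^ 2 - s ^ 2 := by nlinarith
  have hA := Real.sq_sqrt ha0
  have hB := Real.sq_sqrt hb0
  have hC := Real.sq_sqrt hc0
  have : √a + √b ≤ 2 * √(r ^ 2 - s ^ 2) := by
    apply le_of_sq_le_sq _ (by positivity)
    have := sq_nonneg (√a - √b)
    have h3 : a + b ≤ 2 * (r ^ 2 - s ^ 2) := by rw [ha, hb]; nlinarith
    nlinarith
  linarith

/-- The two intervals of length `2 * h` around `± r`, weighted by the size of the chord there. -/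
noncomputable def edgeBound (r h s : ℝ) : ℝ :=
  (Set.Icc (r - h) (r + h)).indicator (fun _ => 4 * √(r * h)) s +
    (Set.Icc (-r - h) (-r + h)).indicator (fun _ => 4 * √(r * h)) s

lemma chordDiff_ge {r h : ℝ} (hr : 0 < r) (hh : 0 < h) (s : ℝ) :
    -edgeBound r h s ≤ chordDiff r h s := by
  have e0 : 0 ≤ 4 * √(r * h) := by positivity
  have i1 : 0 ≤ (Set.Icc (r - h) (r + h)).indicator (fun _ => 4 * √(r * h)) s :=
    Set.indicator_nonneg (fun _ _ => e0) s
  have i2 : 0 ≤ (Set.Icc (-r - h) (-r + h)).indicator (fun _ => 4 * √(r * h)) s :=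
    Set.indicator_nonneg (fun _ _ => e0) s
  by_cases hin : s ≤ r - h ∧ -(r - h) ≤ s
  · have := chordDiff_nonneg hh hin.1 hin.2
    unfold edgeBound; linarith
  have k1 : chord r (s - h) ≤
      (Set.Icc (r - h) (r + h)).indicator (fun _ => 4 * √(r * h)) s ∨ s < r - h := by
    by_cases c : s < r - h
    · exact Or.inr c
    · left
      push Not at c
      by_cases c2 : s ≤ r + h
      · rw [Set.indicator_of_mem (by exact ⟨c, c2⟩)]
        exact chord_edge hr hh (by linarith)
      · push Not at c2
        rw [chord_eq_zero (by nlinarith)]; exact i1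
  have k2 : chord r (s + h) ≤
      (Set.Icc (-r - h) (-r + h)).indicator (fun _ => 4 * √(r * h)) s ∨ -(r - h) < s := by
    by_cases c : -(r - h) < s
    · exact Or.inr c
    · left
      push Not at c
      by_cases c2 : -r - h ≤ s
      · rw [Set.indicator_of_mem (by constructor <;> linarith)]
        rw [← chord_neg]
        exact chord_edge hr hh (by linarith)
      · push Not at c2
        rw [chord_eq_zero (by nlinarith)]; exact i2
  have z1 : r - h ≤ s → chord r (s + h) = 0 := fun c => chord_eq_zero (by nlinarith)
  have z2 : s ≤ -(r - h) → chord r (s - h) = 0 := fun c => chord_eq_zero (by nlinarith)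
  have n0 := chord_nonneg r s
  unfold edgeBound chordDiff
  rw [not_and_or] at hin
  push Not at hin
  rcases hin with c | c
  · have := z1 c.le
    rcases k1 with k | k <;> linarith
  · have := z2 c.le
    rcases k2 with k | k <;> linarith

lemma integrable_edgeBound (r h : ℝ) : Integrable (edgeBound r h) := by
  unfold edgeBound
  apply Integrable.add
  · exact (integrable_indicator_iff measurableSet_Icc).mpr
      (integrableOn_const (by simp))
  · exact (integrable_indicator_iff measurableSet_Icc).mpr
      (integrableOn_const (by simp))

lemma integral_edgeBound {r h : ℝ} (hh : 0 < h) :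
    ∫ s, edgeBound r h s = 16 * √(r * h) * h := by
  unfold edgeBound
  rw [integral_add]
  · rw [integral_indicator measurableSet_Icc, integral_indicator measurableSet_Icc]
    simp only [setIntegral_const, smul_eq_mul, Real.volume_real_Icc]
    rw [max_eq_left (by linarith), max_eq_left (by linarith)]
    ring
  · exact (integrable_indicator_iff measurableSet_Icc).mpr
      (integrableOn_const (by simp))
  · exact (integrable_indicator_iff measurableSet_Icc).mpr
      (integrableOn_const (by simp))

lemma integral_two_mul_sub_sub {𝕜 : Type*} [RCLike 𝕜] {f g k : ℝ → 𝕜} (hf : Integrable f)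
    (hg : Integrable g) (hk : Integrable k) :
    ∫ s, (2 * f s - g s - k s) = 2 * (∫ s, f s) - (∫ s, g s) - ∫ s, k s := by
  have h1 : ∫ s, (2 * f s - g s) = 2 * (∫ s, f s) - ∫ s, g s := by
    rw [integral_sub (hf.const_mul 2) hg, integral_const_mul]
  rw [← h1]
  exact integral_sub ((hf.const_mul 2).sub hg) hk

lemma integrable_chordDiff (r h : ℝ) (hr : 0 < r) : Integrable (chordDiff r h) := by
  unfold chordDiff
  have := integrable_chord r hr
  exact ((this.const_mul 2).sub (this.comp_add_right h)).sub (this.comp_sub_right h)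

lemma integral_chordDiff (r h : ℝ) (hr : 0 < r) : ∫ s, chordDiff r h s = 0 := by
  unfold chordDiff
  have hi := integrable_chord r hr
  rw [integral_two_mul_sub_sub hi (hi.comp_add_right h) (hi.comp_sub_right h),
    integral_add_right_eq_self (chord r) h, integral_sub_right_eq_self (chord r) h]
  ring

/-- The second difference is nonnegative except near the endpoints and has total mass zero, so its
`L¹` norm is governed by the endpoints. -/
lemma integral_abs_chordDiff {r h : ℝ} (hr : 0 < r) (hh : 0 < h) :
    ∫ s, |chordDiff r h s| ≤ 32 * √(r * h) * h := by
  have hb := integrable_edgeBound r h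
  have hd := integrable_chordDiff r h hr
  calc ∫ s, |chordDiff r h s| ≤ ∫ s, (chordDiff r h s + 2 * edgeBound r h s) := by
        apply integral_mono hd.abs (hd.add (hb.const_mul 2))
        intro s
        have h1 := chordDiff_ge hr hh s
        have h2 : 0 ≤ edgeBound r h s := by
          have e0 : 0 ≤ 4 * √(r * h) := by positivity
          exact add_nonneg (Set.indicator_nonneg (fun _ _ => e0) s)
            (Set.indicator_nonneg (fun _ _ => e0) s)
        change |chordDiff r h s| ≤ chordDiff r h s + 2 * edgeBound r h s
        rw [abs_le]; constructor <;> linarith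
    _ = 32 * √(r * h) * h := by
        rw [integral_add hd (hb.const_mul 2), integral_chordDiff r h hr, integral_const_mul,
          integral_edgeBound hh]
        ring

/-- Van der Corput type bound: shifting by half a period `h` twice replaces the chord function by
its second difference. -/
lemma norm_integral_chord_le {r y : ℝ} (hr : 0 < r) (hy : 0 < y) :
    ‖∫ s : ℝ, (chord r s : ℂ) * cexp (((-2 * Real.pi * (s * y) : ℝ) : ℂ) * I)‖ ≤
      4 * √r * y ^ (-(3 / 2) : ℝ) := by
  set h : ℝ := 1 / (2 * y) with hh
  have hpos : 0 < h := by positivity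
  set E : ℝ → ℂ := fun s => cexp (((-2 * Real.pi * (s * y) : ℝ) : ℂ) * I) with hE
  have hEn : ∀ s, ‖E s‖ = 1 := fun s => Complex.norm_exp_ofReal_mul_I _
  have hEc : Continuous E := by rw [hE]; fun_prop
  have hEm : ∀ s, E (s - h) = -E s := by
    intro s
    have : ((-2 * Real.pi * ((s - h) * y) : ℝ) : ℂ) * I =
        ((-2 * Real.pi * (s * y) : ℝ) : ℂ) * I + Real.pi * I := by
      have : -2 * Real.pi * ((s - h) * y) = -2 * Real.pi * (s * y) + Real.pi := by
        rw [hh]; field_simp; ring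
      rw [this]; push_cast; ring
    simp only [hE]
    rw [this, Complex.exp_add, Complex.exp_pi_mul_I]; ring
  have hEp : ∀ s, E (s + h) = -E s := by
    intro s
    have := hEm (s + h)
    rw [add_sub_cancel_right] at this
    rw [this, neg_neg]
  have hint : ∀ c : ℝ, Integrable (fun s => (chord r (s + c) : ℂ) * E s) := by
    intro c
    apply Continuous.integrable_of_hasCompactSupport
    · exact (continuous_ofReal.comp ((continuous_chord r).comp (by fun_prop))).mul hEc
    · have := (hasCompactSupport_chord r hr).comp_homeomorph (Homeomorph.addRight c)
      apply HasCompactSupport.mul_right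
      exact this.comp_left (g := fun x : ℝ => (x : ℂ)) (by simp)
  set J := ∫ s : ℝ, (chord r s : ℂ) * E s with hJ
  have s1 : ∫ s : ℝ, (chord r (s + h) : ℂ) * E s = -J := by
    have := integral_add_right_eq_self (μ := volume) (fun s : ℝ => (chord r s : ℂ) * E (s - h)) h
    simp only [add_sub_cancel_right] at this
    rw [this]
    simp only [hEm, mul_neg]
    rw [integral_neg]
  have s2 : ∫ s : ℝ, (chord r (s - h) : ℂ) * E s = -J := by
    have := integral_sub_right_eq_self (μ := volume) (fun s : ℝ => (chord r s : ℂ) * E (s + h)) h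
    simp only [sub_add_cancel] at this
    rw [this]
    simp only [hEp, mul_neg]
    rw [integral_neg]
  have s3 : ∫ s : ℝ, (chordDiff r h s : ℂ) * E s = 4 * J := by
    have i0 := hint 0
    have i1 := hint h
    have i2 := hint (-h)
    simp only [add_zero, ← sub_eq_add_neg] at i0 i1 i2
    have : ∀ s : ℝ, (chordDiff r h s : ℂ) * E s = 2 * ((chord r s : ℂ) * E s) -
        (chord r (s + h) : ℂ) * E s - (chord r (s - h) : ℂ) * E s := by
      intro s; unfold chordDiff; push_cast; ring
    simp only [this]
    rw [integral_two_mul_sub_sub i0 i1 i2, s1, s2]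
    ring
  have s4 : 4 * ‖J‖ ≤ 32 * √(r * h) * h := by
    calc 4 * ‖J‖ = ‖∫ s : ℝ, (chordDiff r h s : ℂ) * E s‖ := by rw [s3]; simp
      _ ≤ ∫ s : ℝ, ‖(chordDiff r h s : ℂ) * E s‖ := norm_integral_le_integral_norm _
      _ = ∫ s : ℝ, |chordDiff r h s| := by simp [hEn]
      _ ≤ _ := integral_abs_chordDiff hr hpos
  have s5 : √(r * h) * h ≤ √r * y ^ (-(3 / 2) : ℝ) / 2 := by
    rw [Real.sqrt_mul hr.le]
    have : √h * h ≤ y ^ (-(3 / 2) : ℝ) / 2 := by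
      have e1 : y ^ (-(3 / 2) : ℝ) = √(1 / y) * (1 / y) := by
        rw [Real.sqrt_eq_rpow, one_div, Real.inv_rpow hy.le, ← Real.rpow_neg hy.le,
          ← Real.rpow_neg_one, ← Real.rpow_add hy]
        norm_num
      have e2 : √h ≤ √(1 / y) := Real.sqrt_le_sqrt (by
        rw [hh]; apply one_div_le_one_div_of_le hy; linarith)
      have e3 : h = (1 / y) / 2 := by rw [hh]; field_simp
      rw [e1]
      calc √h * h ≤ √(1 / y) * h := by gcongr
        _ = _ := by rw [e3]; ring
    calc √r * √h * h = √r * (√h * h) := by ring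
      _ ≤ √r * (y ^ (-(3 / 2) : ℝ) / 2) := by gcongr
      _ = _ := by ring
  nlinarith

end DiscFourier
end QCircle

/-! ### The smoothed disc and its Fourier transform -/

namespace QCircle

section DiscFourierTwo
open MeasureTheory Complex FourierTransform

/-- Indicator function of the closed disc of radius `r` about `0`, with complex values. -/
noncomputable def discInd (r : ℝ) : ℂ → ℂ := (Metric.closedBall (0 : ℂ) r).indicator 1

lemma integrable_discInd (r : ℝ) : Integrable (discInd r) :=
  (integrable_indicator_iff Metric.isClosed_closedBall.measurableSet).mpr
    (integrableOn_const (measure_closedBall_lt_top (x := (0 : ℂ)) (r := r)).ne)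

lemma integral_discInd {r : ℝ} (hr : 0 ≤ r) : ∫ z, discInd r z = (Real.pi * r ^ 2 : ℝ) := by
  unfold discInd
  rw [integral_indicator Metric.isClosed_closedBall.measurableSet]
  simp only [Pi.one_apply, integral_const, MeasurableSet.univ, measureReal_restrict_apply,
    Set.univ_inter]
  rw [Measure.real, Complex.volume_closedBall]
  simp [ENNReal.toReal_mul, ENNReal.toReal_ofReal hr]
  ring

/-- Fubini: the Fourier integral of a disc in the real direction is that of its chord function. -/
lemma integral_discInd_re {r : ℝ} (hr : 0 < r) (y : ℝ) :
    ∫ z : ℂ, cexp (((-2 * Real.pi * (z.re * y) : ℝ) : ℂ) * I) * discInd r z =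
      ∫ s : ℝ, (chord r s : ℂ) * cexp (((-2 * Real.pi * (s * y) : ℝ) : ℂ) * I) := by
  have hint : Integrable
      (fun z : ℂ => cexp (((-2 * Real.pi * (z.re * y) : ℝ) : ℂ) * I) * discInd r z) := by
    refine (integrable_discInd r).bdd_mul (c := 1) ?_ ?_
    · exact Continuous.aestronglyMeasurable (by fun_prop)
    · exact Filter.Eventually.of_forall fun z => (Complex.norm_exp_ofReal_mul_I _).le
  have mp := Complex.volume_preserving_equiv_real_prod.symm
  rw [← mp.integral_comp (MeasurableEquiv.measurableEmbedding _)]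
  have hint2 := (mp.integrable_comp_emb (MeasurableEquiv.measurableEmbedding _)).mpr hint
  rw [Measure.volume_eq_prod] at hint2 ⊢
  simp only [Function.comp_def] at hint2
  rw [integral_prod _ hint2]
  congr 1
  ext s
  simp only [Complex.measurableEquivRealProd_symm_apply]
  rw [integral_const_mul, mul_comm]
  congr 1
  have : (fun t : ℝ => discInd r ⟨s, t⟩) =
      (Set.Icc (-√(r ^ 2 - s ^ 2)) (√(r ^ 2 - s ^ 2))).indicator
        (fun _ => if s ^ 2 ≤ r ^ 2 then (1 : ℂ) else 0) := by
    ext t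
    unfold discInd
    have e : (⟨s, t⟩ : ℂ) ∈ Metric.closedBall (0 : ℂ) r ↔ s ^ 2 + t ^ 2 ≤ r ^ 2 := by
      rw [mem_closedBall_zero_iff, ← abs_of_pos hr, ← abs_of_nonneg (norm_nonneg _),
        ← sq_le_sq, Complex.sq_norm, Complex.normSq_mk, sq_abs]
      constructor <;> intro h <;> linarith
    by_cases hs : s ^ 2 ≤ r ^ 2
    · rw [if_pos hs]
      have e2 : t ∈ Set.Icc (-√(r ^ 2 - s ^ 2)) (√(r ^ 2 - s ^ 2)) ↔ s ^ 2 + t ^ 2 ≤ r ^ 2 := by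
        rw [Set.mem_Icc, ← abs_le, Real.le_sqrt (abs_nonneg _) (by linarith), sq_abs]
        constructor <;> intro h <;> linarith
      simp only [Set.indicator, e, e2, Pi.one_apply]
    · have : ¬ (s ^ 2 + t ^ 2 ≤ r ^ 2) := by nlinarith [sq_nonneg t]
      simp only [Set.indicator, e, this, if_neg hs, if_false, ite_self]
  rw [this, integral_indicator measurableSet_Icc]
  simp only [integral_const, MeasurableSet.univ, measureReal_restrict_apply, Set.univ_inter,
    Real.volume_real_Icc]
  have hs0 := Real.sqrt_nonneg (r ^ 2 - s ^ 2)
  rw [max_eq_left (by linarith)]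
  unfold chord
  split_ifs with h
  · simp; ring
  · rw [Real.sqrt_eq_zero_of_nonpos (by linarith)]; simp

/-- Decay of the Fourier transform of the disc. -/
lemma norm_fourier_discInd_le {r : ℝ} (hr : 0 < r) {w : ℂ} (hw : w ≠ 0) :
    ‖𝓕 (discInd r) w‖ ≤ 4 * √r * ‖w‖ ^ (-(3 / 2) : ℝ) := by
  have hw' : (0 : ℝ) < ‖w‖ := norm_pos_iff.mpr hw
  have key : 𝓕 (discInd r) w =
      ∫ z : ℂ, cexp (((-2 * Real.pi * (z.re * ‖w‖) : ℝ) : ℂ) * I) * discInd r z := by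
    rw [Real.fourier_eq']
    set u : Circle := ⟨w / ‖w‖, by
      rw [Submonoid.unitSphere]; simp [hw]⟩ with hu
    have hu' : (u : ℂ) = w / ‖w‖ := rfl
    have mp := (rotation u).measurePreserving
    rw [← mp.integral_comp (rotation u).toMeasurableEquiv.measurableEmbedding]
    congr 1
    ext z
    have e1 : discInd r (rotation u z) = discInd r z := by
      simp [discInd, Set.indicator, Circle.norm_coe]
    have e2 : inner ℝ (rotation u z) w = z.re * ‖w‖ := by
      rw [rotation_apply, hu', Complex.inner, mul_comm]
      have : (starRingEnd ℂ) (w / ‖w‖ * z) * w = (‖w‖ : ℂ) * (starRingEnd ℂ) z := by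
        rw [map_mul, map_div₀, Complex.conj_ofReal]
        have h2 : (starRingEnd ℂ) w * w = (‖w‖ : ℂ) ^ 2 := Complex.conj_mul' w
        have h3 : (‖w‖ : ℂ) ≠ 0 := by exact_mod_cast hw'.ne'
        field_simp
        linear_combination (starRingEnd ℂ) z * h2
      rw [this]
      simp [mul_comm]
    rw [e1, e2, smul_eq_mul]
  rw [key, integral_discInd_re hr]
  exact norm_integral_chord_le hr hw'

lemma norm_fourier_discInd_le_area {r : ℝ} (hr : 0 ≤ r) (w : ℂ) :
    ‖𝓕 (discInd r) w‖ ≤ Real.pi * r ^ 2 := by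
  rw [Real.fourier_eq']
  refine (norm_integral_le_integral_norm _).trans ?_
  have h1 : ∫ z : ℂ, ‖cexp (((-2 * Real.pi * inner ℝ z w : ℝ) : ℂ) * I) • discInd r z‖ =
      ∫ z : ℂ, (discInd r z).re := by
    congr 1; ext z
    rw [norm_smul, Complex.norm_exp_ofReal_mul_I, one_mul]
    unfold discInd Set.indicator
    split_ifs <;> simp
  rw [h1]
  have h2 := integral_re (𝕜 := ℂ) (integrable_discInd r)
  simp only [RCLike.re_eq_complex_re] at h2
  rw [h2, integral_discInd hr, Complex.ofReal_re]

/-- The indicator of the disc of radius `r`, averaged over translations by vectors of the disc of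
radius `δ`. -/
noncomputable def smoothDisc (r δ : ℝ) (z : ℂ) : ℂ :=
  ((Real.pi * δ ^ 2 : ℝ) : ℂ)⁻¹ *
    convolution (discInd r) (discInd δ) (ContinuousLinearMap.mul ℂ ℂ) volume z

lemma fourier_smoothDisc (r δ : ℝ) (w : ℂ) :
    𝓕 (smoothDisc r δ) w =
      ((Real.pi * δ ^ 2 : ℝ) : ℂ)⁻¹ * (𝓕 (discInd r) w * 𝓕 (discInd δ) w) := by
  rw [← Real.fourier_mul_convolution_eq (integrable_discInd r) (integrable_discInd δ) w,
    Real.fourier_eq', Real.fourier_eq']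
  rw [← integral_const_mul]
  congr 1
  ext z
  simp only [smoothDisc, smul_eq_mul]
  ring

lemma fourier_smoothDisc_zero {r δ : ℝ} (hr : 0 ≤ r) (hδ : 0 < δ) :
    𝓕 (smoothDisc r δ) 0 = (Real.pi * r ^ 2 : ℝ) := by
  have h0 : ∀ s : ℝ, 0 ≤ s → 𝓕 (discInd s) 0 = (Real.pi * s ^ 2 : ℝ) := by
    intro s hs
    rw [Real.fourier_eq', ← integral_discInd hs]
    congr 1; ext z; simp
  rw [fourier_smoothDisc, h0 r hr, h0 δ hδ.le]
  have : ((Real.pi * δ ^ 2 : ℝ) : ℂ) ≠ 0 := by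
    exact_mod_cast (by positivity : (Real.pi * δ ^ 2 : ℝ) ≠ 0)
  field_simp

/-- The two bounds available for the Fourier transform of `smoothDisc`. -/
lemma norm_fourier_smoothDisc_le {r δ : ℝ} (hr : 0 < r) (hδ : 0 < δ) {w : ℂ} (hw : w ≠ 0) :
    ‖𝓕 (smoothDisc r δ) w‖ ≤
      8 * √r * (‖w‖ ^ (-(3 / 2) : ℝ) * min 1 ((δ * ‖w‖) ^ (-(3 / 2) : ℝ))) := by
  have hw' : (0 : ℝ) < ‖w‖ := norm_pos_iff.mpr hw
  have hpi := Real.pi_gt_three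
  have h1 := norm_fourier_discInd_le hr hw
  have h2 := norm_fourier_discInd_le hδ hw
  have h3 := norm_fourier_discInd_le_area hδ.le w
  set A := ‖𝓕 (discInd r) w‖
  set B := ‖𝓕 (discInd δ) w‖
  have hA : 0 ≤ A := norm_nonneg _
  have hB : 0 ≤ B := norm_nonneg _
  have e : ‖𝓕 (smoothDisc r δ) w‖ = A * (B / (Real.pi * δ ^ 2)) := by
    rw [fourier_smoothDisc, norm_mul, norm_mul, norm_inv, Complex.norm_real, Real.norm_eq_abs,
      abs_of_nonneg (by positivity)]
    field_simp [A, B]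
    rfl
  have hBb : B / (Real.pi * δ ^ 2) ≤ 2 * min 1 ((δ * ‖w‖) ^ (-(3 / 2) : ℝ)) := by
    rw [mul_min_of_nonneg _ _ (by norm_num)]
    refine le_min ?_ ?_
    · rw [div_le_iff₀ (by positivity)]; nlinarith [mul_pos Real.pi_pos (pow_pos hδ 2)]
    · rw [div_le_iff₀ (by positivity), Real.mul_rpow hδ.le hw'.le]
      have e1 : δ ^ (-(3 / 2) : ℝ) * δ ^ 2 = √δ := by
        rw [Real.sqrt_eq_rpow, ← Real.rpow_natCast, ← Real.rpow_add hδ]; norm_num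
      calc B ≤ 4 * √δ * ‖w‖ ^ (-(3 / 2) : ℝ) := h2
        _ ≤ 2 * Real.pi * √δ * ‖w‖ ^ (-(3 / 2) : ℝ) := by gcongr; linarith
        _ = _ := by rw [← e1]; ring
  rw [e]
  calc A * (B / (Real.pi * δ ^ 2)) ≤ (4 * √r * ‖w‖ ^ (-(3 / 2) : ℝ)) *
        (2 * min 1 ((δ * ‖w‖) ^ (-(3 / 2) : ℝ))) := by gcongr
    _ = _ := by ring

lemma smoothDisc_eq_integral (r δ : ℝ) (z : ℂ) :
    smoothDisc r δ z = (((Real.pi * δ ^ 2)⁻¹ *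
      ∫ u : ℂ, (Metric.closedBall (0 : ℂ) δ).indicator
        (fun u => (Metric.closedBall (0 : ℂ) r).indicator (fun _ => (1 : ℝ)) (z - u)) u : ℝ) : ℂ) := by
  unfold smoothDisc
  rw [← convolution_flip, convolution_def]
  rw [Complex.ofReal_mul ((Real.pi * δ ^ 2)⁻¹), Complex.ofReal_inv]
  congr 1
  rw [← integral_complex_ofReal]
  congr 1; ext u
  simp only [discInd, Set.indicator, ContinuousLinearMap.flip_apply, ContinuousLinearMap.mul_apply']
  split_ifs <;> simp

lemma integrableOn_disc_shift (r δ : ℝ) (z : ℂ) :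
    IntegrableOn (fun u => (Metric.closedBall (0 : ℂ) r).indicator (fun _ => (1 : ℝ)) (z - u))
      (Metric.closedBall (0 : ℂ) δ) := by
  refine Measure.integrableOn_of_bounded (M := 1)
    (measure_closedBall_lt_top (x := (0 : ℂ)) (r := δ)).ne ?_ ?_
  · apply Measurable.aestronglyMeasurable
    exact (measurable_const.indicator Metric.isClosed_closedBall.measurableSet).comp
      (measurable_const.sub measurable_id)
  · refine Filter.Eventually.of_forall fun u => ?_
    simp only [Set.indicator]; split_ifs <;> simp

lemma volume_real_disc {δ : ℝ} (hδ : 0 ≤ δ) :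
    volume.real (Metric.closedBall (0 : ℂ) δ) = Real.pi * δ ^ 2 := by
  rw [Measure.real, Complex.volume_closedBall]
  simp [ENNReal.toReal_mul, ENNReal.toReal_ofReal hδ]
  ring

/-- Real-valued form of `smoothDisc`. -/
noncomputable def smoothDiscR (r δ : ℝ) (z : ℂ) : ℝ := (smoothDisc r δ z).re

lemma smoothDisc_eq_ofReal (r δ : ℝ) (z : ℂ) : smoothDisc r δ z = (smoothDiscR r δ z : ℂ) := by
  unfold smoothDiscR
  rw [smoothDisc_eq_integral, Complex.ofReal_re]

lemma smoothDiscR_eq (r δ : ℝ) (z : ℂ) : smoothDiscR r δ z = (Real.pi * δ ^ 2)⁻¹ *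
      ∫ u in Metric.closedBall (0 : ℂ) δ,
        (Metric.closedBall (0 : ℂ) r).indicator (fun _ => (1 : ℝ)) (z - u) := by
  unfold smoothDiscR
  rw [smoothDisc_eq_integral, Complex.ofReal_re,
    integral_indicator Metric.isClosed_closedBall.measurableSet]

lemma smoothDiscR_nonneg (r δ : ℝ) (z : ℂ) : 0 ≤ smoothDiscR r δ z := by
  rw [smoothDiscR_eq]
  refine mul_nonneg (by positivity) (integral_nonneg fun u => ?_)
  exact Set.indicator_nonneg (fun _ _ => zero_le_one) _

lemma smoothDiscR_le_one {δ : ℝ} (r : ℝ) (hδ : 0 < δ) (z : ℂ) : smoothDiscR r δ z ≤ 1 := by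
  rw [smoothDiscR_eq, inv_mul_le_iff₀ (by positivity), mul_one, ← volume_real_disc hδ.le]
  have : ∫ u in Metric.closedBall (0 : ℂ) δ, (1 : ℝ) = volume.real (Metric.closedBall (0 : ℂ) δ) := by
    simp
  rw [← this]
  refine integral_mono (integrableOn_disc_shift r δ z)
    (integrableOn_const (measure_closedBall_lt_top (x := (0 : ℂ)) (r := δ)).ne) fun u => ?_
  simp only [Set.indicator]; split_ifs <;> simp

lemma smoothDiscR_eq_one {r δ : ℝ} (hδ : 0 < δ) {z : ℂ} (hz : ‖z‖ ≤ r - δ) :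
    smoothDiscR r δ z = 1 := by
  rw [smoothDiscR_eq]
  have : ∫ u in Metric.closedBall (0 : ℂ) δ,
        (Metric.closedBall (0 : ℂ) r).indicator (fun _ => (1 : ℝ)) (z - u) =
        ∫ u in Metric.closedBall (0 : ℂ) δ, (1 : ℝ) := by
    refine setIntegral_congr_fun Metric.isClosed_closedBall.measurableSet fun u hu => ?_
    rw [Set.indicator_of_mem]
    rw [mem_closedBall_zero_iff] at hu ⊢
    linarith [norm_sub_le z u]
  rw [this]
  simp only [integral_const, MeasurableSet.univ, measureReal_restrict_apply, Set.univ_inter,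
    smul_eq_mul, mul_one]
  rw [volume_real_disc hδ.le]
  exact inv_mul_cancel₀ (by positivity)

lemma smoothDiscR_eq_zero {r δ : ℝ} {z : ℂ} (hz : r + δ < ‖z‖) :
    smoothDiscR r δ z = 0 := by
  rw [smoothDiscR_eq]
  have : ∫ u in Metric.closedBall (0 : ℂ) δ,
        (Metric.closedBall (0 : ℂ) r).indicator (fun _ => (1 : ℝ)) (z - u) =
        ∫ u in Metric.closedBall (0 : ℂ) δ, (0 : ℝ) := by
    refine setIntegral_congr_fun Metric.isClosed_closedBall.measurableSet fun u hu => ?_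
    rw [Set.indicator_of_notMem]
    rw [mem_closedBall_zero_iff] at hu ⊢
    have := norm_sub_norm_le z u
    linarith
  rw [this]; simp

lemma hasCompactSupport_smoothDisc (r δ : ℝ) : HasCompactSupport (smoothDisc r δ) := by
  apply HasCompactSupport.intro (isCompact_closedBall (0 : ℂ) (r + δ))
  intro z hz
  rw [mem_closedBall_zero_iff, not_le] at hz
  rw [smoothDisc_eq_ofReal, smoothDiscR_eq_zero hz, Complex.ofReal_zero]

lemma continuous_smoothDisc {r : ℝ} (hr : 0 < r) (δ : ℝ) : Continuous (smoothDisc r δ) := by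
  have : smoothDisc r δ = fun z => (smoothDiscR r δ z : ℂ) := funext (smoothDisc_eq_ofReal r δ)
  rw [this]
  refine Complex.continuous_ofReal.comp ?_
  have e : smoothDiscR r δ = fun z => (Real.pi * δ ^ 2)⁻¹ *
      ∫ u in Metric.closedBall (0 : ℂ) δ,
        (Metric.closedBall (0 : ℂ) r).indicator (fun _ => (1 : ℝ)) (z - u) :=
    funext (smoothDiscR_eq r δ)
  rw [e]
  refine continuous_const.mul (continuous_iff_continuousAt.mpr fun z => ?_)
  refine continuousAt_of_dominated (bound := fun _ => 1)
    (Filter.Eventually.of_forall fun x => (integrableOn_disc_shift r δ x).aestronglyMeasurable)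
    (Filter.Eventually.of_forall fun x => Filter.Eventually.of_forall fun u => ?_)
    (integrableOn_const (measure_closedBall_lt_top (x := (0 : ℂ)) (r := δ)).ne) ?_
  · simp only [Set.indicator]; split_ifs <;> simp
  · -- the integrand is continuous at `z` unless `z - u` lies on the boundary circle
    have h0 : ∀ᵐ u ∂(volume : Measure ℂ), u ∉ Metric.sphere z r :=
      measure_eq_zero_iff_ae_notMem.mp (Measure.addHaar_sphere_of_ne_zero volume z hr.ne')
    refine ae_restrict_of_ae (h0.mono fun u hu => ?_)
    have hc : ContinuousAt ((Metric.closedBall (0 : ℂ) r).indicator (fun _ => (1 : ℝ))) (z - u) := by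
      refine (continuous_const (y := (1 : ℝ))).continuousOn.continuousAt_indicator ?_
      rw [frontier_closedBall _ hr.ne']
      intro h
      apply hu
      rw [mem_sphere_zero_iff_norm] at h
      rw [mem_sphere_iff_norm, norm_sub_rev, h]
    exact ContinuousAt.comp (f := fun x => x - u) hc (by fun_prop)

end DiscFourierTwo
end QCircle

/-! ### Poisson summation on the integer lattice -/

namespace QCircle

section Poisson
open MeasureTheory Complex UnitAddTorus Topology

variable {d : Type*} [Fintype d]

/-- An integer vector, seen as a real vector. -/
def intVec (m : d → ℤ) : d → ℝ := fun i => (m i : ℝ)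

lemma intVec_add (m n : d → ℤ) : intVec (m + n) = intVec m + intVec n := by
  ext i; simp [intVec]

/-- The half-open unit cube with lower corner `m`. -/
def unitCube (m : d → ℤ) : Set (d → ℝ) := {x | ∀ i, x i ∈ Set.Ioc (m i : ℝ) (m i + 1)}

lemma mem_unitCube_iff {m : d → ℤ} {x : d → ℝ} :
    x ∈ unitCube m ↔ m = fun i => ⌈x i⌉ - 1 := by
  unfold unitCube
  rw [Set.mem_ofPred_eq, funext_iff]
  refine forall_congr' fun i => ?_
  rw [Set.mem_Ioc, eq_sub_iff_add_eq, eq_comm, Int.ceil_eq_iff]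
  push_cast
  constructor <;> rintro ⟨h1, h2⟩ <;> constructor <;> linarith

lemma measurableSet_unitCube (m : d → ℤ) : MeasurableSet (unitCube m) :=
  MeasurableSet.univ_pi' fun _ => measurableSet_Ioc

lemma pairwise_disjoint_unitCube :
    Pairwise (Function.onFun Disjoint (unitCube (d := d))) := by
  intro m n hmn
  rw [Function.onFun, Set.disjoint_left]
  intro x h1 h2
  exact hmn ((mem_unitCube_iff.mp h1).trans (mem_unitCube_iff.mp h2).symm)

lemma iUnion_unitCube : (⋃ m, unitCube (d := d) m) = Set.univ :=
  Set.eq_univ_of_forall fun x => Set.mem_iUnion.mpr ⟨_, mem_unitCube_iff.mpr rfl⟩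

lemma setIntegral_unitCube_shift {E : Type*} [NormedAddCommGroup E] [NormedSpace ℝ E]
    (F : (d → ℝ) → E) (m : d → ℤ) :
    ∫ x in unitCube 0, F (x + intVec m) = ∫ x in unitCube m, F x := by
  have h := (measurePreserving_add_right (volume : Measure (d → ℝ))
    (intVec m)).setIntegral_preimage_emb
    (measurableEmbedding_addRight _) F (unitCube m)
  have hset : (fun x => x + intVec m) ⁻¹' unitCube m = unitCube 0 := by
    ext x
    refine forall_congr' fun i => ?_
    simp only [Pi.add_apply, Pi.zero_apply, intVec, Set.mem_Ioc, Int.cast_zero]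
    constructor <;> rintro ⟨h1, h2⟩ <;> constructor <;> linarith
  rw [← h, hset]

variable {g : (d → ℝ) → ℂ}

lemma finite_near (hg : HasCompactSupport g) (R : ℝ) :
    {m : d → ℤ | ∃ x : d → ℝ, ‖x‖ ≤ R ∧ g (x + intVec m) ≠ 0}.Finite := by
  obtain ⟨B, hB⟩ := hg.isBounded.exists_norm_le
  set N : ℤ := ⌈B + R⌉
  refine (Set.finite_Icc (fun _ => -N : d → ℤ) (fun _ => N)).subset ?_
  rintro m ⟨x, hx, hgx⟩
  have h1 := hB _ (subset_tsupport g hgx)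
  have h2 : ‖intVec m‖ ≤ B + R := by
    have : intVec m = (x + intVec m) - x := by abel
    rw [this]
    exact (norm_sub_le _ _).trans (by linarith)
  have h3 : ∀ i, |(m i : ℝ)| ≤ N := fun i =>
    ((norm_le_pi_norm (intVec m) i).trans h2).trans (Int.le_ceil _)
  constructor <;> intro i
  · have := (abs_le.mp (h3 i)).1
    exact_mod_cast this
  · have := (abs_le.mp (h3 i)).2
    exact_mod_cast this

/-- Sum of the integer translates of `g`. -/
noncomputable def periodize (g : (d → ℝ) → ℂ) (x : d → ℝ) : ℂ := ∑ᶠ m : d → ℤ, g (x + intVec m)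

lemma continuous_periodize (hc : Continuous g) (hg : HasCompactSupport g) :
    Continuous (periodize g) := by
  refine continuous_finsum (fun m => by fun_prop) fun x => ?_
  refine ⟨Metric.closedBall x 1, Metric.closedBall_mem_nhds x one_pos, ?_⟩
  refine (finite_near hg (‖x‖ + 1)).subset ?_
  rintro m ⟨y, hy1, hy2⟩
  refine ⟨y, ?_, hy1⟩
  rw [mem_closedBall_iff_norm] at hy2
  linarith [norm_sub_norm_le y x]

lemma periodize_add (x : d → ℝ) (n : d → ℤ) : periodize g (x + intVec n) = periodize g x := by
  unfold periodize
  rw [← finsum_comp_equiv (Equiv.addLeft n) (f := fun m => g (x + intVec m))]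
  congr 1; ext m
  rw [Equiv.coe_addLeft, intVec_add, add_assoc]

lemma finite_support_translates (hg : HasCompactSupport g) (x : d → ℝ) :
    (Function.support fun m : d → ℤ => g (x + intVec m)).Finite :=
  (finite_near hg ‖x‖).subset fun _ hm => ⟨x, le_rfl, hm⟩

/-- The projection of `ℝ^d` onto the torus. -/
def torusProj : C(d → ℝ, UnitAddTorus d) where
  toFun x i := (x i : UnitAddCircle)
  continuous_toFun := by
    refine continuous_pi fun i => ?_
    exact (AddCircle.continuous_mk' 1).comp (continuous_apply i)

lemma isQuotientMap_torusProj : IsQuotientMap (torusProj (d := d)) := by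
  have : IsOpenQuotientMap (Pi.map fun (_ : d) (x : ℝ) => (x : UnitAddCircle)) :=
    IsOpenQuotientMap.piMap fun _ => QuotientAddGroup.isOpenQuotientMap_mk
  exact this.isQuotientMap

lemma exists_intVec_of_torusProj_eq {x y : d → ℝ} (h : torusProj x = torusProj y) :
    ∃ n : d → ℤ, y = x + intVec n := by
  have : ∀ i, ∃ n : ℤ, y i = x i + n := by
    intro i
    have hi : (x i : UnitAddCircle) = (y i : UnitAddCircle) := congrFun h i
    obtain ⟨n, hn⟩ := AddSubgroup.mem_zmultiples_iff.mp (QuotientAddGroup.eq.mp hi)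
    refine ⟨n, ?_⟩
    simp at hn
    linarith
  choose n hn using this
  exact ⟨n, funext hn⟩

lemma mFourier_torusProj (n : d → ℤ) (x : d → ℝ) :
    mFourier n (torusProj x) = cexp (((2 * Real.pi * ∑ i, (n i : ℝ) * x i : ℝ) : ℂ) * I) := by
  change ∏ i, fourier (n i) (x i : UnitAddCircle) = _
  simp only [fourier_coe_apply]
  rw [← Complex.exp_sum]
  congr 1
  push_cast
  rw [Finset.mul_sum, Finset.sum_mul]
  refine Finset.sum_congr rfl fun i _ => ?_
  ring

/-- The Fourier coefficient of `g` at the integer frequency `n`. -/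
noncomputable def fourierInt (g : (d → ℝ) → ℂ) (n : d → ℤ) : ℂ :=
  ∫ x : d → ℝ, cexp (((-2 * Real.pi * ∑ i, (n i : ℝ) * x i : ℝ) : ℂ) * I) * g x

/-- Unfolding: the Fourier coefficients of the periodization are those of the function. -/
lemma integral_unitCube_periodize (hc : Continuous g) (hg : HasCompactSupport g) (n : d → ℤ) :
    ∫ x in unitCube 0, cexp (((-2 * Real.pi * ∑ i, (n i : ℝ) * x i : ℝ) : ℂ) * I) * periodize g x =
      fourierInt g n := by
  set e : (d → ℝ) → ℂ := fun x => cexp (((-2 * Real.pi * ∑ i, (n i : ℝ) * x i : ℝ) : ℂ) * I) with he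
  have hec : Continuous e := by rw [he]; fun_prop
  have hper : ∀ x (m : d → ℤ), e (x + intVec m) = e x := by
    intro x m
    simp only [he]
    rw [Complex.exp_eq_exp_iff_exists_int]
    refine ⟨-∑ i, n i * m i, ?_⟩
    simp only [Pi.add_apply, intVec, mul_add, Finset.sum_add_distrib]
    push_cast
    ring
  set F : (d → ℝ) → ℂ := fun x => e x * g x with hF
  have hFint : Integrable F := (hec.mul hc).integrable_of_hasCompactSupport hg.mul_left
  have hsum := hasSum_integral_iUnion measurableSet_unitCube pairwise_disjoint_unitCube
    (f := F) (μ := volume) hFint.integrableOn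
  have hsumn := hasSum_integral_iUnion measurableSet_unitCube pairwise_disjoint_unitCube
    (f := fun x => ‖F x‖) (μ := volume) hFint.norm.integrableOn
  rw [iUnion_unitCube, setIntegral_univ] at hsum
  have hshift : ∀ m : d → ℤ, Integrable (fun x => F (x + intVec m)) :=
    fun m => hFint.comp_add_right _
  have key := hasSum_integral_of_summable_integral_norm (μ := volume.restrict (unitCube (0 : d → ℤ)))
    (F := fun m x => F (x + intVec m)) (fun m => (hshift m).integrableOn)
    (by
      simp only [setIntegral_unitCube_shift (fun x => ‖F x‖)]
      exact hsumn.summable)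
  simp only [setIntegral_unitCube_shift F] at key
  have := key.unique hsum
  unfold fourierInt
  rw [← this]
  congr 1
  ext x
  have h1 : ∀ m, F (x + intVec m) = e x * g (x + intVec m) := fun m => by simp only [hF, hper]
  simp only [h1]
  rw [tsum_mul_left]
  congr 1
  rw [tsum_eq_finsum (finite_support_translates hg x)]
  rfl

/-- Poisson summation on `ℤ^d` for a continuous function of compact support. -/
lemma poisson_intVec (hc : Continuous g) (hg : HasCompactSupport g)
    (hs : Summable (fourierInt g)) : HasSum (fourierInt g) (∑ᶠ m : d → ℤ, g (intVec m)) := by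
  set P : C(d → ℝ, ℂ) := ⟨periodize g, continuous_periodize hc hg⟩
  have hfac : ∀ x y : d → ℝ, torusProj x = torusProj y → P x = P y := by
    intro x y h
    obtain ⟨n, rfl⟩ := exists_intVec_of_torusProj_eq h
    exact (periodize_add x n).symm
  set G : C(UnitAddTorus d, ℂ) := isQuotientMap_torusProj.lift P hfac
  have hG : ∀ x, G (torusProj x) = periodize g x := fun x =>
    DFunLike.congr_fun (isQuotientMap_torusProj.lift_comp P hfac) x
  have hcoef : mFourierCoeff G = fourierInt g := by
    ext n
    rw [← integral_unitCube_periodize hc hg, mFourierCoeff_eq_integral G n (fun _ => 0)]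
    have : {x : d → ℝ | ∀ i, x i ∈ Set.Ioc (0 : ℝ) (0 + 1)} = unitCube 0 := by
      simp [unitCube]
    rw [this]
    congr 1
    ext x
    have e1 : mFourier (-n) (fun i => (x i : UnitAddCircle)) = _ := mFourier_torusProj (-n) x
    have e2 : G (fun i => (x i : UnitAddCircle)) = _ := hG x
    rw [e1, e2, smul_eq_mul]
    congr 4
    simp
  have := hasSum_mFourier_series_apply_of_summable (f := G) (hcoef ▸ hs) (torusProj 0)
  rw [hcoef, hG] at this
  have e0 : ∀ n : d → ℤ, mFourier n (torusProj (0 : d → ℝ)) = 1 := by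
    intro n; rw [mFourier_torusProj]; simp
  simp only [e0, smul_eq_mul, mul_one] at this
  convert this using 1
  simp [periodize]

end Poisson
end QCircle

/-! ### Poisson summation for planar lattices -/

namespace QCircle

section Planar
open MeasureTheory Complex FourierTransform

/-- The vector `w` with `⟪b₀, w⟫ = n₀` and `⟪b₁, w⟫ = n₁`. -/
noncomputable def dualVec (b₀ b₁ : ℂ) (n : Fin 2 → ℤ) : ℂ :=
  ⟨(n 0 * b₁.im - n 1 * b₀.im) / (b₀.re * b₁.im - b₀.im * b₁.re),
    (n 1 * b₀.re - n 0 * b₁.re) / (b₀.re * b₁.im - b₀.im * b₁.re)⟩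

lemma inner_complex (z w : ℂ) : inner ℝ z w = z.re * w.re + z.im * w.im := by
  rw [Complex.inner]; simp; ring

variable {b₀ b₁ : ℂ}

lemma inner_dualVec_zero (h : b₀.re * b₁.im - b₀.im * b₁.re ≠ 0) (n : Fin 2 → ℤ) :
    inner ℝ b₀ (dualVec b₀ b₁ n) = n 0 := by
  rw [inner_complex, dualVec]
  simp only
  rw [mul_div_assoc', mul_div_assoc', ← add_div, div_eq_iff h]
  ring

lemma inner_dualVec_one (h : b₀.re * b₁.im - b₀.im * b₁.re ≠ 0) (n : Fin 2 → ℤ) :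
    inner ℝ b₁ (dualVec b₀ b₁ n) = n 1 := by
  rw [inner_complex, dualVec]
  simp only
  rw [mul_div_assoc', mul_div_assoc', ← add_div, div_eq_iff h]
  ring

lemma dualVec_eq_zero (h : b₀.re * b₁.im - b₀.im * b₁.re ≠ 0) {n : Fin 2 → ℤ}
    (hn : dualVec b₀ b₁ n = 0) : n = 0 := by
  have h0 := inner_dualVec_zero h n
  have h1 := inner_dualVec_one h n
  rw [hn, inner_zero_right] at h0 h1
  ext i
  fin_cases i
  · exact_mod_cast h0.symm
  · exact_mod_cast h1.symm

/-- The real-linear map of the plane sending `1, i` to `b₀, b₁`. -/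
noncomputable def latMap (b₀ b₁ : ℂ) : ℂ →ₗ[ℝ] ℂ where
  toFun z := z.re * b₀ + z.im * b₁
  map_add' x y := by simp; ring
  map_smul' c x := by simp; ring

lemma det_latMap : LinearMap.det (latMap b₀ b₁) = b₀.re * b₁.im - b₀.im * b₁.re := by
  rw [← LinearMap.det_toMatrix Complex.basisOneI, Matrix.det_fin_two]
  simp [LinearMap.toMatrix_apply, latMap]
  ring

/-- Change of variables for the coordinates with respect to a basis of the plane. -/
lemma integral_comp_basis (h : b₀.re * b₁.im - b₀.im * b₁.re ≠ 0) (F : ℂ → ℂ) :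
    ∫ x : Fin 2 → ℝ, F (x 0 * b₀ + x 1 * b₁) =
      ((|b₀.re * b₁.im - b₀.im * b₁.re|⁻¹ : ℝ) : ℂ) * ∫ z, F z := by
  have h1 : ∫ x : Fin 2 → ℝ, F (x 0 * b₀ + x 1 * b₁) = ∫ z : ℂ, F (latMap b₀ b₁ z) := by
    rw [← Complex.volume_preserving_equiv_pi.integral_comp
      (Complex.measurableEquivPi.measurableEmbedding)]
    rfl
  have hd : LinearMap.det (latMap b₀ b₁) ≠ 0 := by rwa [det_latMap]
  have hemb : MeasurableEmbedding (latMap b₀ b₁) :=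
    ((LinearEquiv.ofIsUnitDet (v := Complex.basisOneI) (v' := Complex.basisOneI)
      (f := latMap b₀ b₁) (by
        rw [LinearMap.det_toMatrix]; exact hd.isUnit)).toContinuousLinearEquiv.toHomeomorph
      ).measurableEmbedding
  rw [h1, ← hemb.integral_map, Measure.map_linearMap_addHaar_eq_smul_addHaar _ hd,
    integral_smul_measure, ENNReal.toReal_ofReal (abs_nonneg _), det_latMap, abs_inv]
  rfl

/-- Poisson summation over a translate of a planar lattice. -/
lemma poisson_lattice (h : b₀.re * b₁.im - b₀.im * b₁.re ≠ 0) {f : ℂ → ℂ} (hc : Continuous f)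
    (hf : HasCompactSupport f) (z : ℂ) (hs : Summable fun n => 𝓕 f (dualVec b₀ b₁ n)) :
    HasSum (fun n => ((|b₀.re * b₁.im - b₀.im * b₁.re|⁻¹ : ℝ) : ℂ) *
        (cexp (((2 * Real.pi * inner ℝ z (dualVec b₀ b₁ n) : ℝ) : ℂ) * I) *
          𝓕 f (dualVec b₀ b₁ n)))
      (∑ᶠ m : Fin 2 → ℤ, f (z + (m 0 * b₀ + m 1 * b₁))) := by
  set D := b₀.re * b₁.im - b₀.im * b₁.re with hD
  set g : (Fin 2 → ℝ) → ℂ := fun x => f (z + (x 0 * b₀ + x 1 * b₁)) with hg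
  have hgc : Continuous g := by rw [hg]; fun_prop
  have hgs : HasCompactSupport g := by
    obtain ⟨B, hB⟩ := hf.isBounded.exists_norm_le
    refine HasCompactSupport.of_support_subset_isCompact
      (K := Metric.closedBall 0 ((B + ‖z‖) * (‖b₀‖ + ‖b₁‖) / |D|)) (isCompact_closedBall _ _) ?_
    intro x hx
    have h1 := hB _ (subset_tsupport f hx)
    set y : ℂ := x 0 * b₀ + x 1 * b₁ with hy
    have h2 : ‖y‖ ≤ B + ‖z‖ := by
      have : y = (z + y) - z := by ring
      rw [this]
      exact (norm_sub_le _ _).trans (by linarith)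
    have hyre : y.re = x 0 * b₀.re + x 1 * b₁.re := by simp [hy]
    have hyim : y.im = x 0 * b₀.im + x 1 * b₁.im := by simp [hy]
    have hD0 : 0 < |D| := abs_pos.mpr h
    -- Cramer's rule, with `|im (conj b * y)| ≤ ‖b‖ ‖y‖`
    have cross : ∀ b : ℂ, |y.re * b.im - y.im * b.re| ≤ (B + ‖z‖) * ‖b‖ := by
      intro b
      have e : y.re * b.im - y.im * b.re = ((starRingEnd ℂ) y * b).im := by simp; ring
      rw [e]
      refine (Complex.abs_im_le_norm _).trans ?_
      rw [norm_mul, Complex.norm_conj]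
      gcongr
    have hBz : 0 ≤ B + ‖z‖ := (norm_nonneg y).trans h2
    rw [mem_closedBall_zero_iff, le_div_iff₀ hD0]
    have hx0 : |x 0| * |D| ≤ (B + ‖z‖) * (‖b₀‖ + ‖b₁‖) := by
      rw [← abs_mul]
      have : x 0 * D = y.re * b₁.im - y.im * b₁.re := by rw [hyre, hyim, hD]; ring
      rw [this]
      refine (cross b₁).trans ?_
      gcongr
      linarith [norm_nonneg b₀]
    have hx1 : |x 1| * |D| ≤ (B + ‖z‖) * (‖b₀‖ + ‖b₁‖) := by
      rw [← abs_mul]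
      have : x 1 * D = -(y.re * b₀.im - y.im * b₀.re) := by rw [hyre, hyim, hD]; ring
      rw [this, abs_neg]
      refine (cross b₀).trans ?_
      gcongr
      linarith [norm_nonneg b₁]
    have : ‖x‖ ≤ (B + ‖z‖) * (‖b₀‖ + ‖b₁‖) / |D| := by
      refine (pi_norm_le_iff_of_nonneg (by positivity)).mpr fun i => ?_
      rw [le_div_iff₀ hD0]
      fin_cases i
      · exact hx0
      · exact hx1
    rwa [le_div_iff₀ hD0] at this
  have hcoef : fourierInt g = fun n => ((|D|⁻¹ : ℝ) : ℂ) *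
      (cexp (((2 * Real.pi * inner ℝ z (dualVec b₀ b₁ n) : ℝ) : ℂ) * I) *
          𝓕 f (dualVec b₀ b₁ n)) := by
    ext n
    set w := dualVec b₀ b₁ n with hw
    set F : ℂ → ℂ := fun y => cexp (((-2 * Real.pi * inner ℝ y w : ℝ) : ℂ) * I) * f (z + y) with hF
    have e1 : fourierInt g n = ∫ x : Fin 2 → ℝ, F (x 0 * b₀ + x 1 * b₁) := by
      unfold fourierInt
      congr 1
      ext x
      have : inner ℝ ((x 0 : ℂ) * b₀ + x 1 * b₁) w = ∑ i, (n i : ℝ) * x i := by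
        rw [← Complex.real_smul, ← Complex.real_smul, inner_add_left, real_inner_smul_left,
          real_inner_smul_left, hw, inner_dualVec_zero h, inner_dualVec_one h, Fin.sum_univ_two]
        ring
      simp only [hF, this, hg]
    rw [e1, integral_comp_basis h]
    congr 1
    rw [Real.fourier_eq', ← integral_const_mul, ← integral_add_left_eq_self _ (-z)]
    congr 1
    ext v
    have e2 : (-2 * Real.pi * inner ℝ (-z + v) w : ℝ) =
        2 * Real.pi * inner ℝ z w + (-2 * Real.pi * inner ℝ v w) := by
      rw [inner_add_left, inner_neg_left]; ring
    simp only [hF, e2, smul_eq_mul]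
    rw [add_neg_cancel_left, Complex.ofReal_add, add_mul, Complex.exp_add]
    ring
  have hsum : Summable (fourierInt g) := by
    rw [hcoef]
    refine Summable.mul_left _ ?_
    refine hs.norm.of_norm_bounded fun n => ?_
    rw [norm_mul, Complex.norm_exp_ofReal_mul_I, one_mul]
  have := poisson_intVec hgc hgs hsum
  rw [hcoef] at this
  exact this

end Planar
end QCircle

/-! ### Ideals as planar lattices -/

namespace QCircle

section Lattice
open Module

variable {K : Type*} [Field K] [NumberField K] (ι : K →+* ℂ)

/-- The embedding of the ring of integers into the complex plane. -/
def emb : 𝓞 K →+* ℂ := ι.comp (algebraMap (𝓞 K) K)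

lemma emb_injective : Function.Injective (emb ι) :=
  ι.injective.comp RingOfIntegers.coe_injective

variable (hdeg : Module.finrank ℚ K = 2) (himag : ∀ v : InfinitePlace K, v.IsComplex)
include hdeg himag

lemma nrComplexPlaces_eq_one : InfinitePlace.nrComplexPlaces K = 1 := by
  have h0 : InfinitePlace.nrRealPlaces K = 0 := nrRealPlaces_eq_zero_iff.mpr ⟨himag⟩
  have := InfinitePlace.card_add_two_mul_card_eq_rank K
  omega

lemma normSq_eq_abs_norm (x : K) : Complex.normSq (ι x) = |(Algebra.norm ℚ x : ℝ)| := by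
  have hc : Fintype.card (InfinitePlace K) = 1 := by
    have h0 : InfinitePlace.nrRealPlaces K = 0 := nrRealPlaces_eq_zero_iff.mpr ⟨himag⟩
    rw [InfinitePlace.card_eq_nrRealPlaces_add_nrComplexPlaces,
      nrComplexPlaces_eq_one hdeg himag, h0]
  obtain ⟨v, hv⟩ := Fintype.card_eq_one_iff.mp hc
  have h1 := InfinitePlace.prod_eq_abs_norm x
  rw [Fintype.prod_eq_single (InfinitePlace.mk ι) (fun w hw => absurd ((hv w).trans (hv _).symm) hw)] at h1
  rw [← Rat.cast_abs, ← h1, InfinitePlace.mult, if_neg, InfinitePlace.apply, Complex.normSq_eq_norm_sq]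
  exact InfinitePlace.not_isReal_iff_isComplex.mpr (himag _)

lemma normSq_emb (z : 𝓞 K) : Complex.normSq (emb ι z) = (Ideal.absNorm (Ideal.span {z}) : ℝ) := by
  rw [emb, RingHom.comp_apply, normSq_eq_abs_norm ι hdeg himag, Ideal.absNorm_span_singleton,
    ← Algebra.coe_norm_int]
  rw [Nat.cast_natAbs]
  push_cast
  rfl

lemma absNorm_le_normSq {a : Ideal (𝓞 K)} {z : 𝓞 K} (hz : z ∈ a) (h0 : z ≠ 0) :
    (Ideal.absNorm a : ℝ) ≤ Complex.normSq (emb ι z) := by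
  rw [normSq_emb ι hdeg himag]
  have h1 : Ideal.absNorm a ∣ Ideal.absNorm (Ideal.span {z}) :=
    Ideal.absNorm_dvd_absNorm_of_le ((Ideal.span_singleton_le_iff_mem _).mpr hz)
  have h2 : Ideal.absNorm (Ideal.span {z}) ≠ 0 := by
    rw [Ne, Ideal.absNorm_eq_zero_iff, Ideal.span_singleton_eq_bot]
    exact h0
  exact_mod_cast Nat.le_of_dvd (Nat.pos_of_ne_zero h2) h1

/-- The two complex embeddings of an imaginary quadratic field. -/
lemma exists_equiv_embeddings : ∃ e : Fin 2 ≃ (K →ₐ[ℚ] ℂ),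
    (∀ x, e 0 x = ι x) ∧ ∀ x, e 1 x = (starRingEnd ℂ) (ι x) := by
  set f : Fin 2 → (K →ₐ[ℚ] ℂ) :=
    ![ι.toRatAlgHom, ((starRingEnd ℂ).comp ι).toRatAlgHom] with hf
  have hinj : Function.Injective f := by
    have hne : f 0 ≠ f 1 := by
      intro h
      have h1 := InfinitePlace.isComplex_mk_iff.mp (himag (InfinitePlace.mk ι))
      refine h1 ?_
      rw [ComplexEmbedding.isReal_iff]
      ext x
      exact (DFunLike.congr_fun h x).symm
    intro i j hij
    fin_cases i <;> fin_cases j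
    · rfl
    · exact absurd hij hne
    · exact absurd hij.symm hne
    · rfl
  have hbij : Function.Bijective f := by
    rw [Fintype.bijective_iff_injective_and_card]
    exact ⟨hinj, by rw [AlgHom.card, hdeg, Fintype.card_fin]⟩
  exact ⟨Equiv.ofBijective f hbij, fun _ => rfl, fun _ => rfl⟩

lemma abs_discr_eq (b : Basis (Fin 2) ℤ (𝓞 K)) :
    |(discr K : ℝ)| = 4 * ((emb ι (b 0)).re * (emb ι (b 1)).im -
      (emb ι (b 0)).im * (emb ι (b 1)).re) ^ 2 := by
  obtain ⟨e, h0, h1⟩ := exists_equiv_embeddings ι hdeg himag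
  set B := b.localizationLocalization ℚ (nonZeroDivisors ℤ) K with hB
  have hd := Algebra.discr_eq_det_embeddingsMatrixReindex_pow_two ℚ ℂ B e
  rw [hB, Algebra.discr_localizationLocalization, discr_eq_discr, Matrix.det_fin_two] at hd
  simp only [Algebra.embeddingsMatrixReindex, Algebra.embeddingsMatrix, Matrix.reindex_apply,
    Matrix.submatrix_apply, Matrix.of_apply, Equiv.symm_symm, Equiv.refl_symm, Equiv.coe_refl,
    id, h0, h1, Basis.localizationLocalization_apply] at hd
  have h2 : ((discr K : ℝ) : ℂ) = ((-(4 * ((emb ι (b 0)).re * (emb ι (b 1)).im -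
      (emb ι (b 0)).im * (emb ι (b 1)).re) ^ 2) : ℝ) : ℂ) := by
    have h3 : ((discr K : ℝ) : ℂ) = (algebraMap ℚ ℂ) ((algebraMap ℤ ℚ) (discr K)) := by simp
    rw [h3, hd]
    change (emb ι (b 0) * (starRingEnd ℂ) (emb ι (b 1)) -
      (starRingEnd ℂ) (emb ι (b 0)) * emb ι (b 1)) ^ 2 = _
    have h4 : emb ι (b 0) * (starRingEnd ℂ) (emb ι (b 1)) -
      (starRingEnd ℂ) (emb ι (b 0)) * emb ι (b 1) = ((-2 * ((emb ι (b 0)).re * (emb ι (b 1)).im -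
      (emb ι (b 0)).im * (emb ι (b 1)).re) : ℝ) : ℂ) * Complex.I := by
      apply Complex.ext <;> simp <;> ring
    rw [h4, mul_pow, Complex.I_sq]
    push_cast
    ring
  rw [Complex.ofReal_inj.mp h2, abs_neg, abs_of_nonneg (by positivity)]

/-- Every nonzero ideal has a `ℤ`-basis, whose covolume in the plane is `√|Δ_K| N(I) / 2`. -/
lemma exists_ideal_basis {I : Ideal (𝓞 K)} (hI : I ≠ 0) :
    ∃ c : Basis (Fin 2) ℤ I,
      |(emb ι (c 0 : 𝓞 K)).re * (emb ι (c 1 : 𝓞 K)).im -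
        (emb ι (c 0 : 𝓞 K)).im * (emb ι (c 1 : 𝓞 K)).re| =
        Real.sqrt |(discr K : ℝ)| / 2 * (Ideal.absNorm I : ℝ) := by
  have hr : finrank ℤ (𝓞 K) = 2 := (RingOfIntegers.rank K).trans hdeg
  set b : Basis (Fin 2) ℤ (𝓞 K) := finBasisOfFinrankEq ℤ (𝓞 K) hr
  have hrI : finrank ℤ I = 2 := (Ideal.finrank_eq_finrank b I hI).trans hr
  set c : Basis (Fin 2) ℤ I := finBasisOfFinrankEq ℤ I hrI
  refine ⟨c, ?_⟩
  have h1 := Ideal.natAbs_det_basis_change b I c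
  rw [Basis.det_apply, Matrix.det_fin_two] at h1
  simp only [Basis.toMatrix_apply, Function.comp_apply] at h1
  have hrep : ∀ i, emb ι (c i : 𝓞 K) = (b.repr (c i) 0 : ℂ) * emb ι (b 0) +
      (b.repr (c i) 1 : ℂ) * emb ι (b 1) := by
    intro i
    have := b.sum_repr (c i : 𝓞 K)
    rw [Fin.sum_univ_two] at this
    conv_lhs => rw [← this]
    simp
  have h2 := abs_discr_eq ι hdeg himag b
  set D := (emb ι (b 0)).re * (emb ι (b 1)).im - (emb ι (b 0)).im * (emb ι (b 1)).re with hD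
  have h3 : Real.sqrt |(discr K : ℝ)| = 2 * |D| := by
    rw [h2, show (4 : ℝ) * D ^ 2 = (2 * D) ^ 2 by ring, Real.sqrt_sq_eq_abs, abs_mul]
    norm_num
  rw [h3, ← h1, hrep 0, hrep 1, Nat.cast_natAbs, mul_div_cancel_left₀ _ (two_ne_zero' ℝ)]
  push_cast
  rw [← abs_mul]
  congr 1
  simp [hD]
  ring

/-- Minkowski: an ideal contains a short nonzero vector. -/
lemma exists_short_vector : ∃ M : ℝ, 0 < M ∧ ∀ J : Ideal (𝓞 K), J ≠ 0 →
    ∃ j ∈ J, j ≠ 0 ∧ ‖emb ι j‖ ≤ M * Real.sqrt (Ideal.absNorm J) := by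
  set M₀ := (4 / Real.pi) ^ InfinitePlace.nrComplexPlaces K *
        (finrank ℚ K).factorial / (finrank ℚ K) ^ (finrank ℚ K) * Real.sqrt |discr K| with hM₀
  have hpos : 0 < M₀ := by
    have : (0 : ℝ) < |(discr K : ℝ)| := by
      have := discr_ne_zero K
      positivity
    rw [hM₀, hdeg]
    push_cast
    positivity
  refine ⟨Real.sqrt M₀, Real.sqrt_pos.mpr hpos, fun J hJ => ?_⟩
  obtain ⟨x, hx, hx0, hxn⟩ := exists_ne_zero_mem_ideal_of_norm_le_mul_sqrt_discr K
    (FractionalIdeal.mk0 K ⟨J, mem_nonZeroDivisors_of_ne_zero hJ⟩)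
  rw [FractionalIdeal.coe_mk0] at hx hxn
  obtain ⟨j, hj, rfl⟩ := (FractionalIdeal.mem_coeIdeal _).mp hx
  refine ⟨j, hj, fun h => hx0 (by rw [h, map_zero]), ?_⟩
  rw [FractionalIdeal.coeIdeal_absNorm] at hxn
  rw [← Real.sqrt_mul hpos.le]
  refine Real.le_sqrt_of_sq_le ?_
  rw [← Complex.normSq_eq_norm_sq]
  change Complex.normSq (ι (algebraMap _ _ j)) ≤ _
  rw [normSq_eq_abs_norm ι hdeg himag]
  refine le_trans (by exact_mod_cast hxn) (le_of_eq ?_)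
  rw [hM₀]
  push_cast
  ring

lemma exists_im_ne_zero : ∃ θ : 𝓞 K, (emb ι θ).im ≠ 0 := by
  obtain ⟨c, hc⟩ := exists_ideal_basis ι hdeg himag (I := ⊤) (by
    rw [Ne, Ideal.zero_eq_bot]; exact top_ne_bot)
  by_contra! h
  rw [h, h] at hc
  have h1 := discr_ne_zero K
  have h2 : 0 < Real.sqrt |(discr K : ℝ)| := by positivity
  simp only [mul_zero, zero_mul, sub_zero, abs_zero, Ideal.absNorm_top, Nat.cast_one,
    mul_one] at hc
  linarith

/-- The number of points of an ideal in a disc, by the pigeonhole principle. -/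
lemma card_ideal_disc_le {a : Ideal (𝓞 K)} (ha : a ≠ 0) {t : ℝ} (ht : 0 ≤ t) :
    {z : 𝓞 K | z ∈ a ∧ Complex.normSq (emb ι z) ≤ t}.Finite ∧
    (Nat.card {z : 𝓞 K // z ∈ a ∧ Complex.normSq (emb ι z) ≤ t} : ℝ) ≤
      50 * (1 + t / Ideal.absNorm a) := by
  have hN : (0 : ℝ) < Ideal.absNorm a :=
    Nat.cast_pos.mpr (Nat.pos_of_ne_zero (mt Ideal.absNorm_eq_zero_iff.mp ha))
  set N : ℝ := (Ideal.absNorm a : ℝ)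
  set h : ℝ := Real.sqrt N / 2 with hh
  have hh0 : 0 < h := by positivity
  have hh2 : h ^ 2 = N / 4 := by rw [hh, div_pow, Real.sq_sqrt hN.le]; norm_num
  set S := {z : 𝓞 K | z ∈ a ∧ Complex.normSq (emb ι z) ≤ t} with hS
  set F : 𝓞 K → ℤ × ℤ := fun z => (⌊(emb ι z).re / h⌋, ⌊(emb ι z).im / h⌋) with hF
  set L : ℤ := ⌊Real.sqrt t / h⌋ with hL
  have hL0 : 0 ≤ L := Int.floor_nonneg.mpr (by positivity)
  have hmaps : ∀ z ∈ S, F z ∈ (Finset.Icc (-(L + 1)) L ×ˢ Finset.Icc (-(L + 1)) L) := by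
    rintro z ⟨-, hz⟩
    have key : ∀ u : ℝ, |u| ≤ ‖emb ι z‖ → ⌊u / h⌋ ∈ Finset.Icc (-(L + 1)) L := by
      intro u hu
      have h1 : |u| ≤ Real.sqrt t := hu.trans (Real.le_sqrt_of_sq_le (by
        rwa [← Complex.normSq_eq_norm_sq]))
      rw [abs_le] at h1
      rw [Finset.mem_Icc]
      constructor
      · rw [Int.le_floor]
        push_cast
        have : -(Real.sqrt t / h) ≤ u / h := by
          rw [← neg_div]; gcongr; exact h1.1
        linarith [Int.lt_floor_add_one (Real.sqrt t / h)]
      · exact Int.floor_le_floor (by gcongr; exact h1.2)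
    exact Finset.mem_product.mpr ⟨key _ (Complex.abs_re_le_norm _), key _ (Complex.abs_im_le_norm _)⟩
  have hinj : Set.InjOn F S := by
    rintro z ⟨hz, -⟩ w ⟨hw, -⟩ hzw
    by_contra hne
    have h1 := absNorm_le_normSq ι hdeg himag (a.sub_mem hz hw) (sub_ne_zero.mpr hne)
    have key : ∀ u v : ℝ, ⌊u / h⌋ = ⌊v / h⌋ → (u - v) ^ 2 ≤ h ^ 2 := by
      intro u v huv
      have := Int.abs_sub_lt_one_of_floor_eq_floor huv
      rw [← sub_div, abs_div, abs_of_pos hh0, div_lt_one hh0] at this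
      exact sq_le_sq' (by linarith [neg_abs_le (u - v)]) (by linarith [le_abs_self (u - v)])
    have h2 := key _ _ (Prod.ext_iff.mp hzw).1
    have h3 := key _ _ (Prod.ext_iff.mp hzw).2
    rw [Complex.normSq_apply, map_sub, Complex.sub_re, Complex.sub_im] at h1
    change N ≤ _ at h1
    nlinarith
  have hfin : S.Finite :=
    Set.Finite.of_finite_image (((Finset.finite_toSet _).subset (by
      rintro _ ⟨z, hz, rfl⟩; exact hmaps z hz))) hinj
  refine ⟨hfin, ?_⟩
  have hcard : Nat.card S ≤ ((Finset.Icc (-(L + 1)) L ×ˢ Finset.Icc (-(L + 1)) L).card) := by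
    rw [Nat.card_coe_set_eq, Set.ncard_eq_toFinset_card S hfin]
    refine Finset.card_le_card_of_injOn F (fun z hz => hmaps z (hfin.mem_toFinset.mp hz)) ?_
    rw [hfin.coe_toFinset]
    exact hinj
  have h4 : ((Finset.Icc (-(L + 1)) L).card : ℝ) = 2 * L + 2 := by
    rw [Int.card_Icc]
    have : ((L + 1 - -(L + 1)).toNat : ℤ) = 2 * L + 2 := by omega
    exact_mod_cast this
  have h5 : (Nat.card S : ℝ) ≤ (2 * L + 2) ^ 2 := by
    refine le_trans (Nat.cast_le.mpr hcard) ?_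
    rw [Finset.card_product, Nat.cast_mul, h4, sq]
  refine le_trans h5 ?_
  have h6 : (L : ℝ) ≤ Real.sqrt t / h := Int.floor_le _
  have h7 : (Real.sqrt t / h) ^ 2 = 4 * (t / N) := by
    rw [div_pow, Real.sq_sqrt ht, hh2]; field_simp
  have h8 : (0 : ℝ) ≤ L := by exact_mod_cast hL0
  have h9 : (L : ℝ) ^ 2 ≤ 4 * (t / N) := by rw [← h7]; gcongr
  have h10 : 0 ≤ t / N := by positivity
  nlinarith [sq_nonneg ((L : ℝ) - 1)]

end Lattice
end QCircle

/-! ### Square roots of one and divisors -/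

namespace QCircle

section Divisors
open UniqueFactorizationMonoid

variable {K : Type*} [Field K] [NumberField K]

lemma factors_eq (q : Ideal (𝓞 K)) : factors q = normalizedFactors q :=
  factors_eq_normalizedFactors q

lemma prod_prime_pow_eq {q : Ideal (𝓞 K)} (hq : q ≠ 0) :
    ∏ p ∈ (factors q).toFinset, p ^ (factors q).count p = q := by
  rw [← Finset.prod_multiset_count, factors_eq, Ideal.prod_normalizedFactors_eq_self hq]

lemma prime_of_mem {q p : Ideal (𝓞 K)} (hp : p ∈ (factors q).toFinset) : Prime p :=
  prime_of_factor _ (Multiset.mem_toFinset.mp hp)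

lemma mem_iff_forall_mem_prime_pow {q : Ideal (𝓞 K)} (hq : q ≠ 0) (z : 𝓞 K) :
    z ∈ q ↔ ∀ p ∈ (factors q).toFinset, z ∈ p ^ (factors q).count p := by
  have h := IsDedekindDomain.inf_pow_eq_prod_of_prime (factors q).toFinset id
    (fun p => (factors q).count p) (fun p hp => prime_of_mem hp) (fun p _ r _ h => h)
  simp only [id] at h
  rw [prod_prime_pow_eq hq] at h
  conv_lhs => rw [← h]
  rw [Submodule.mem_finsetInf]

/-- Modulo a prime power a square root of `1` is `1` or `-1`, up to a factor `2`. -/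
lemma two_mul_mem_prime_pow {p : Ideal (𝓞 K)} (hp : Prime p) (k : ℕ) {x : 𝓞 K}
    (hx : x ^ 2 - 1 ∈ p ^ k) : 2 * (x - 1) ∈ p ^ k ∨ 2 * (x + 1) ∈ p ^ k := by
  have hdvd : ∀ y : 𝓞 K, ∃ i, Ideal.span {y} ⊔ p ^ k = p ^ i := by
    intro y
    obtain ⟨i, -, hi⟩ := (dvd_prime_pow hp k).mp (Ideal.dvd_iff_le.mpr
      (le_sup_right : p ^ k ≤ Ideal.span {y} ⊔ p ^ k))
    exact ⟨i, associated_iff_eq.mp hi⟩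
  obtain ⟨i, hi⟩ := hdvd (x - 1)
  obtain ⟨j, hj⟩ := hdvd (x + 1)
  have h1 : x - 1 ∈ p ^ i := hi ▸ Ideal.mem_sup_left (Ideal.mem_span_singleton_self _)
  have h2 : x + 1 ∈ p ^ j := hj ▸ Ideal.mem_sup_left (Ideal.mem_span_singleton_self _)
  have hle : p ^ i * p ^ j ≤ p ^ k := by
    rw [← hi, ← hj, Ideal.sup_mul, Ideal.mul_sup]
    refine sup_le (sup_le ?_ Ideal.mul_le_right) Ideal.mul_le_left
    rw [Ideal.span_singleton_mul_span_singleton, Ideal.span_singleton_le_iff_mem]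
    convert hx using 1
    ring
  rcases le_total i j with hij | hij
  · right
    have h3 : x + 1 ∈ p ^ i := Ideal.pow_le_pow_right hij h2
    have h4 : (2 : 𝓞 K) ∈ p ^ i := by
      have := (p ^ i).sub_mem h3 h1
      convert this using 1
      ring
    exact hle (Ideal.mul_mem_mul h4 h2)
  · left
    have h3 : x - 1 ∈ p ^ j := Ideal.pow_le_pow_right hij h1
    have h4 : (2 : 𝓞 K) ∈ p ^ j := by
      have := (p ^ j).sub_mem h2 h3
      convert this using 1
      ring
    rw [mul_comm]
    exact hle (Ideal.mul_mem_mul h1 h4)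

lemma two_mul_sub_mem {q : Ideal (𝓞 K)} (hq : q ≠ 0) {x y : 𝓞 K} (hx : x ^ 2 - 1 ∈ q)
    (hy : y ^ 2 - 1 ∈ q)
    (h : ∀ p ∈ (factors q).toFinset, 2 * (x - 1) ∈ p ^ (factors q).count p ↔
      2 * (y - 1) ∈ p ^ (factors q).count p) : 2 * (x - y) ∈ q := by
  rw [mem_iff_forall_mem_prime_pow hq] at hx hy ⊢
  intro p hp
  have h1 := two_mul_mem_prime_pow (prime_of_mem hp) _ (hx p hp)
  have h2 := two_mul_mem_prime_pow (prime_of_mem hp) _ (hy p hp)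
  by_cases hxp : 2 * (x - 1) ∈ p ^ (factors q).count p
  · have := Ideal.sub_mem _ hxp ((h p hp).mp hxp)
    convert this using 1
    ring
  · have := Ideal.sub_mem _ (h1.resolve_left hxp) (h2.resolve_left (mt (h p hp).mpr hxp))
    convert this using 1
    ring

lemma finite_quotient {q : Ideal (𝓞 K)} (hq : q ≠ 0) : Finite (𝓞 K ⧸ q) :=
  Ring.HasFiniteQuotients.finiteQuotient hq

lemma card_quotient (q : Ideal (𝓞 K)) : Nat.card (𝓞 K ⧸ q) = Ideal.absNorm q := by
  rw [Ideal.absNorm_apply, Submodule.cardQuot_apply]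

lemma card_two_torsion_le {q : Ideal (𝓞 K)} (hq : q ≠ 0) :
    Nat.card {x : 𝓞 K ⧸ q // 2 * x = 0} ≤ Ideal.absNorm (Ideal.span {(2 : 𝓞 K)}) := by
  have := finite_quotient hq
  set f : (𝓞 K ⧸ q) →+ (𝓞 K ⧸ q) := AddMonoidHom.mulLeft 2 with hf
  have h1 : Nat.card {x : 𝓞 K ⧸ q // 2 * x = 0} = Nat.card f.ker := rfl
  have h2 := AddSubgroup.card_mul_index f.ker
  have h3 := AddSubgroup.card_mul_index f.range
  rw [AddSubgroup.index_ker] at h2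
  have hpos : 0 < Nat.card f.range := Nat.card_pos
  have h4 : Nat.card f.ker = f.range.index := by
    refine Nat.eq_of_mul_eq_mul_right hpos ?_
    rw [h2, ← h3, mul_comm]
  have h5 : Function.Surjective (Ideal.Quotient.mk q).toAddMonoidHom := Ideal.Quotient.mk_surjective
  rw [h1, h4, ← AddSubgroup.index_comap_of_surjective f.range h5]
  refine Nat.le_of_dvd (Nat.pos_of_ne_zero ?_)
    (AddSubgroup.index_dvd_of_le (H := (Ideal.span {(2 : 𝓞 K)}).toAddSubgroup) ?_)
  rotate_left
  · intro x hx
    obtain ⟨y, rfl⟩ := Ideal.mem_span_singleton.mp (show x ∈ Ideal.span {(2 : 𝓞 K)} from hx)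
    exact ⟨Ideal.Quotient.mk q y, (map_mul (Ideal.Quotient.mk q) 2 y).symm⟩
  · change Ideal.absNorm (Ideal.span {(2 : 𝓞 K)}) ≠ 0
    rw [Ne, Ideal.absNorm_eq_zero_iff, Ideal.span_singleton_eq_bot]
    exact two_ne_zero

/-- Number of square roots of `1` modulo an ideal. -/
lemma card_sqrt_one_le {q : Ideal (𝓞 K)} (hq : q ≠ 0) :
    Nat.card {u : 𝓞 K ⧸ q // u ^ 2 = 1} ≤
      Ideal.absNorm (Ideal.span {(2 : 𝓞 K)}) * 2 ^ omegaI q := by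
  have := finite_quotient hq
  have := Fintype.ofFinite (𝓞 K ⧸ q)
  choose l hl using Ideal.Quotient.mk_surjective (I := q)
  set T : (𝓞 K ⧸ q) → Finset (Ideal (𝓞 K)) := fun u =>
    (factors q).toFinset.filter fun p => 2 * (l u - 1) ∈ p ^ (factors q).count p with hT
  have hsq : ∀ u : 𝓞 K ⧸ q, u ^ 2 = 1 → l u ^ 2 - 1 ∈ q := by
    intro u hu
    rw [← Ideal.Quotient.eq_zero_iff_mem, map_sub, map_pow, hl, hu, map_one, sub_self]
  rw [Nat.card_eq_fintype_card, Fintype.card_subtype, omegaI, ← Finset.card_powerset]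
  refine Finset.card_le_mul_card_image_of_maps_to (f := T)
    (fun u _ => Finset.mem_powerset.mpr (Finset.filter_subset _ _)) _ fun b _ => ?_
  rcases Finset.eq_empty_or_nonempty
    ((Finset.univ.filter fun u : 𝓞 K ⧸ q => u ^ 2 = 1).filter fun u => T u = b) with he | ⟨v, hv⟩
  · rw [he]; simp
  refine le_trans ?_ (card_two_torsion_le hq)
  rw [Nat.card_eq_fintype_card, Fintype.card_subtype]
  refine Finset.card_le_card_of_injOn (fun u => u - v) ?_ (fun x _ y _ h => sub_left_injective h)
  intro u hu
  simp only [Finset.coe_filter, Finset.mem_filter, Finset.mem_univ, true_and,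
    Set.mem_ofPred_eq] at hu hv ⊢
  have h := two_mul_sub_mem hq (hsq u hu.1) (hsq v hv.1) (fun p hp => by
    have : p ∈ T u ↔ p ∈ T v := by rw [hu.2, hv.2]
    simpa only [hT, Finset.mem_filter, hp, true_and] using this)
  rw [← Ideal.Quotient.eq_zero_iff_mem] at h
  rw [map_mul, map_sub, hl, hl, map_ofNat] at h
  exact h

/-- The number of ideal divisors of `q`. -/
noncomputable def numDiv (q : Ideal (𝓞 K)) : ℕ :=
  ∏ p ∈ (factors q).toFinset, ((factors q).count p + 1)

lemma divisors_finite {q : Ideal (𝓞 K)} (hq : q ≠ 0) :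
    {d : Ideal (𝓞 K) | q ≤ d}.Finite ∧ {d : Ideal (𝓞 K) | q ≤ d}.ncard ≤ numDiv q := by
  have hd0 : ∀ d : Ideal (𝓞 K), q ≤ d → d ≠ 0 := fun d hd h => hq (le_bot_iff.mp (by rwa [h] at hd))
  have hmaps : ∀ d ∈ {d : Ideal (𝓞 K) | q ≤ d},
      normalizedFactors d ∈ (↑(Finset.Iic (normalizedFactors q)) : Set _) := by
    intro d hd
    rw [Finset.mem_coe, Finset.mem_Iic, ← dvd_iff_normalizedFactors_le_normalizedFactors
      (hd0 d hd) hq, Ideal.dvd_iff_le]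
    exact hd
  have hinj : Set.InjOn normalizedFactors {d : Ideal (𝓞 K) | q ≤ d} := by
    intro d hd e he h
    rw [← Ideal.prod_normalizedFactors_eq_self (hd0 d hd), h,
      Ideal.prod_normalizedFactors_eq_self (hd0 e he)]
  refine ⟨Set.Finite.of_injOn hmaps hinj (Finset.finite_toSet _), ?_⟩
  refine (Set.ncard_le_ncard_of_injOn _ hmaps hinj (Finset.finite_toSet _)).trans ?_
  rw [Set.ncard_coe_finset, Multiset.card_Iic, numDiv, factors_eq]

lemma two_pow_omegaI_le (q : Ideal (𝓞 K)) : 2 ^ omegaI q ≤ numDiv q := by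
  rw [omegaI, numDiv, ← Finset.prod_const]
  refine Finset.prod_le_prod' fun p hp => ?_
  have := Multiset.count_pos.mpr (Multiset.mem_toFinset.mp hp)
  omega

variable (K) in
/-- The divisor bound. -/
lemma numDiv_le {ε : ℝ} (hε : 0 < ε) : ∃ C : ℝ, 0 < C ∧ ∀ q : Ideal (𝓞 K), q ≠ 0 →
    (numDiv q : ℝ) ≤ C * (Ideal.absNorm q : ℝ) ^ ε := by
  set P : ℕ := ⌈(2 : ℝ) ^ (1 / ε)⌉₊ with hP
  have hfin : {I : Ideal (𝓞 K) | Ideal.absNorm I ≤ P}.Finite := Ideal.finite_setOfPred_absNorm_le P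
  set c : ℝ := max 1 (1 / (ε * Real.log 2)) with hc
  have hlog : 0 < Real.log 2 := Real.log_pos one_lt_two
  have hc1 : 1 ≤ c := le_max_left _ _
  have hbound : ∀ p : Ideal (𝓞 K), Prime p → ∀ k : ℕ, ((k : ℝ) + 1) ≤
      (if Ideal.absNorm p ≤ P then c else 1) * ((Ideal.absNorm p : ℝ) ^ k) ^ ε := by
    intro p hp k
    have h2 : (2 : ℝ) ≤ Ideal.absNorm p := by
      have h0 : Ideal.absNorm p ≠ 0 := mt Ideal.absNorm_eq_zero_iff.mp hp.ne_zero
      have h1 : Ideal.absNorm p ≠ 1 := fun h =>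
        hp.not_isUnit (by rw [Ideal.absNorm_eq_one_iff.mp h, ← Ideal.one_eq_top]; exact isUnit_one)
      exact_mod_cast (by omega : 2 ≤ Ideal.absNorm p)
    rw [← Real.rpow_natCast, ← Real.rpow_mul (by linarith), mul_comm (k : ℝ),
      Real.rpow_mul (by linarith), Real.rpow_natCast]
    split_ifs with hs
    · have h3 : (1 : ℝ) + k * (ε * Real.log 2) ≤ ((Ideal.absNorm p : ℝ) ^ ε) ^ k := by
        have h4 : 1 + ε * Real.log 2 ≤ (Ideal.absNorm p : ℝ) ^ ε := by
          have : (2 : ℝ) ^ ε ≤ (Ideal.absNorm p : ℝ) ^ ε := by gcongr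
          refine le_trans ?_ this
          rw [Real.rpow_def_of_pos two_pos, mul_comm]
          linarith [Real.add_one_le_exp (Real.log 2 * ε)]
        calc (1 : ℝ) + k * (ε * Real.log 2) ≤ (1 + ε * Real.log 2) ^ k :=
              one_add_mul_le_pow (by nlinarith [mul_pos hε hlog]) k
          _ ≤ _ := by gcongr
      have h5 : 1 ≤ c * (ε * Real.log 2) := by
        have := le_max_right 1 (1 / (ε * Real.log 2))
        rw [← hc, div_le_iff₀ (by positivity)] at this
        exact this
      calc (k : ℝ) + 1 ≤ c * (1 + k * (ε * Real.log 2)) := by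
            have : (k : ℝ) * 1 ≤ k * (c * (ε * Real.log 2)) := by gcongr
            linarith
        _ ≤ _ := by gcongr
    · have h3 : (2 : ℝ) ≤ (Ideal.absNorm p : ℝ) ^ ε := by
        have h4 : (2 : ℝ) ^ (1 / ε) ≤ Ideal.absNorm p :=
          (Nat.le_ceil _).trans (by exact_mod_cast (not_le.mp hs).le)
        calc (2 : ℝ) = ((2 : ℝ) ^ (1 / ε)) ^ ε := by
              rw [← Real.rpow_mul two_pos.le, one_div_mul_cancel hε.ne', Real.rpow_one]
          _ ≤ _ := by gcongr
      have h5 : ((k : ℝ) + 1) ≤ 2 ^ k := by exact_mod_cast Nat.lt_two_pow_self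
      rw [one_mul]
      refine h5.trans ?_
      gcongr
  refine ⟨c ^ hfin.toFinset.card, by positivity, fun q hq => ?_⟩
  have hN : (Ideal.absNorm q : ℝ) =
      ∏ p ∈ (factors q).toFinset, (Ideal.absNorm p : ℝ) ^ (factors q).count p := by
    conv_lhs => rw [← prod_prime_pow_eq hq]
    rw [map_prod]
    push_cast
    simp
  rw [hN, ← Real.finsetProd_rpow _ _ (fun _ _ => by positivity), numDiv]
  push_cast
  calc _ ≤ ∏ p ∈ (factors q).toFinset, ((if Ideal.absNorm p ≤ P then c else 1) *
        ((Ideal.absNorm p : ℝ) ^ (factors q).count p) ^ ε) :=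
        Finset.prod_le_prod (fun _ _ => by positivity)
          fun p hp => hbound p (prime_of_mem hp) _
    _ ≤ _ := by
      rw [Finset.prod_mul_distrib]
      refine mul_le_mul_of_nonneg_right ?_ (Finset.prod_nonneg fun _ _ => by positivity)
      rw [Finset.prod_ite, Finset.prod_const_one, mul_one, Finset.prod_const]
      refine pow_le_pow_right₀ hc1 (Finset.card_le_card ?_)
      intro p hp
      exact hfin.mem_toFinset.mpr (Finset.mem_filter.mp hp).2

end Divisors
end QCircle

/-! ### Quadratic exponential sums -/

namespace QCircle

section ExponentialSum

variable {R : Type*} [CommRing R] [Fintype R] [Fintype Rˣ]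

/-- The sum of an additive character over `c` times the squares of the units. -/
noncomputable def squareSum (c : R) (ψ : AddChar R ℂ) : ℂ := ∑ u : Rˣ, ψ (c * (u : R) ^ 2)

lemma squareSum_mulShift (c : R) (ψ : AddChar R ℂ) (v : Rˣ) :
    squareSum c (ψ.mulShift ((v : R) ^ 2)) = squareSum c ψ := by
  unfold squareSum
  rw [← Equiv.sum_comp (Equiv.mulLeft v) (fun u : Rˣ => ψ (c * (u : R) ^ 2))]
  refine Finset.sum_congr rfl fun u _ => ?_
  rw [AddChar.mulShift_apply, Equiv.coe_mulLeft, Units.val_mul]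
  congr 1
  ring

/-- Second moment over all characters, by orthogonality. -/
lemma sum_norm_squareSum_sq {c : R} (hc : IsUnit c) :
    ∑ ψ : AddChar R ℂ, ‖squareSum c ψ‖ ^ 2 =
      Fintype.card R * (Fintype.card Rˣ * Nat.card {u : Rˣ // u ^ 2 = 1}) := by
  have h1 : ∀ ψ : AddChar R ℂ, ((‖squareSum c ψ‖ ^ 2 : ℝ) : ℂ) =
      ∑ u : Rˣ, ∑ v : Rˣ, ψ (c * (u : R) ^ 2 - c * (v : R) ^ 2) := by
    intro ψ
    rw [Complex.ofReal_pow, ← Complex.mul_conj', squareSum, map_sum, Finset.sum_mul_sum]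
    refine Finset.sum_congr rfl fun u _ => Finset.sum_congr rfl fun v _ => ?_
    rw [sub_eq_add_neg, AddChar.map_add_eq_mul, AddChar.map_neg_eq_conj]
  have h2 : ∀ u : Rˣ, ∑ v : Rˣ, ∑ ψ : AddChar R ℂ, ψ (c * (u : R) ^ 2 - c * (v : R) ^ 2) =
      Nat.card {u : Rˣ // u ^ 2 = 1} * Fintype.card R := by
    intro u
    simp only [AddChar.sum_apply_eq_ite]
    rw [← Equiv.sum_comp (Equiv.mulLeft u)]
    have h3 : ∀ v : Rˣ, (c * (u : R) ^ 2 - c * ((Equiv.mulLeft u v : Rˣ) : R) ^ 2 = 0) ↔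
        v ^ 2 = 1 := by
      intro v
      rw [Equiv.coe_mulLeft, Units.val_mul, sub_eq_zero, hc.mul_right_inj, mul_pow, eq_comm,
        ← Units.val_pow_eq_pow_val, ← Units.val_pow_eq_pow_val, ← Units.val_mul, Units.val_inj,
        mul_eq_left]
    simp only [h3]
    rw [← Finset.sum_filter, Finset.sum_const, nsmul_eq_mul, Nat.card_eq_fintype_card,
      Fintype.card_subtype]
  have h4 : ((∑ ψ : AddChar R ℂ, ‖squareSum c ψ‖ ^ 2 : ℝ) : ℂ) =
      ((Fintype.card R * (Fintype.card Rˣ * Nat.card {u : Rˣ // u ^ 2 = 1}) : ℝ) : ℂ) := by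
    rw [Complex.ofReal_sum]
    simp only [h1]
    rw [Finset.sum_comm]
    have : ∀ u : Rˣ, ∑ ψ : AddChar R ℂ, ∑ v : Rˣ, ψ (c * (u : R) ^ 2 - c * (v : R) ^ 2) =
        Nat.card {u : Rˣ // u ^ 2 = 1} * Fintype.card R := fun u => by
      rw [Finset.sum_comm, h2]
    simp only [this]
    rw [Finset.sum_const, nsmul_eq_mul, Finset.card_univ]
    push_cast
    ring
  exact_mod_cast h4

/-- A bound for `∑ ψ(c u²)` in terms of the stabilizer of `ψ` under multiplication by squares:
all characters in the orbit of `ψ` have the same sum, and the second moment is known. -/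
lemma norm_squareSum_sq_le {c : R} (hc : IsUnit c) (ψ : AddChar R ℂ) {k : ℕ}
    (hk : Nat.card {v : Rˣ // ψ.mulShift ((v : R) ^ 2) = ψ} ≤ k) :
    ‖squareSum c ψ‖ ^ 2 ≤ k * (Fintype.card R * Nat.card {u : Rˣ // u ^ 2 = 1}) := by
  rw [Nat.card_eq_fintype_card, Fintype.card_subtype] at hk
  have hfib : ∀ χ : AddChar R ℂ,
      (Finset.univ.filter fun v : Rˣ => ψ.mulShift ((v : R) ^ 2) = χ).card ≤ k := by
    intro χ
    rcases Finset.eq_empty_or_nonempty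
      (Finset.univ.filter fun v : Rˣ => ψ.mulShift ((v : R) ^ 2) = χ) with he | ⟨w, hw⟩
    · rw [he]; simp
    refine le_trans ?_ hk
    refine Finset.card_le_card_of_injOn (fun v => w⁻¹ * v) ?_
      (fun x _ y _ h => mul_left_cancel h)
    intro v hv
    simp only [Finset.coe_filter, Finset.mem_filter, Finset.mem_univ, true_and,
      Set.mem_ofPred_eq] at hv hw ⊢
    ext x
    have h1 : ψ ((v : R) ^ 2 * (((w⁻¹ : Rˣ) : R) ^ 2 * x)) =
        ψ ((w : R) ^ 2 * (((w⁻¹ : Rˣ) : R) ^ 2 * x)) := by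
      exact (DFunLike.congr_fun (hv.trans hw.symm) _ :)
    rw [AddChar.mulShift_apply, Units.val_mul]
    convert h1 using 2
    · ring
    · rw [← mul_assoc, ← mul_pow, Units.mul_inv, one_pow, one_mul]
  have h1 : (Fintype.card Rˣ : ℝ) * ‖squareSum c ψ‖ ^ 2 ≤
      k * ∑ χ : AddChar R ℂ, ‖squareSum c χ‖ ^ 2 := by
    calc (Fintype.card Rˣ : ℝ) * ‖squareSum c ψ‖ ^ 2
        = ∑ v : Rˣ, ‖squareSum c (ψ.mulShift ((v : R) ^ 2))‖ ^ 2 := by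
          simp only [squareSum_mulShift, Finset.sum_const, Finset.card_univ, nsmul_eq_mul]
      _ = ∑ χ : AddChar R ℂ, ∑ v ∈ Finset.univ.filter (fun v : Rˣ => ψ.mulShift ((v : R) ^ 2) = χ),
            ‖squareSum c (ψ.mulShift ((v : R) ^ 2))‖ ^ 2 :=
          (Finset.sum_fiberwise Finset.univ (fun v : Rˣ => ψ.mulShift ((v : R) ^ 2))
            (fun v : Rˣ => ‖squareSum c (ψ.mulShift ((v : R) ^ 2))‖ ^ 2)).symm
      _ ≤ ∑ χ : AddChar R ℂ, k * ‖squareSum c χ‖ ^ 2 := by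
          refine Finset.sum_le_sum fun χ _ => ?_
          have : ∀ v ∈ Finset.univ.filter (fun v : Rˣ => ψ.mulShift ((v : R) ^ 2) = χ),
              ‖squareSum c (ψ.mulShift ((v : R) ^ 2))‖ ^ 2 = ‖squareSum c χ‖ ^ 2 := by
            intro v hv
            rw [(Finset.mem_filter.mp hv).2]
          rw [Finset.sum_congr rfl this, Finset.sum_const, nsmul_eq_mul]
          gcongr
          exact hfib χ
      _ = _ := by rw [Finset.mul_sum]
  rw [sum_norm_squareSum_sq hc] at h1
  have h2 : (0 : ℝ) < Fintype.card Rˣ := Nat.cast_pos.mpr Fintype.card_pos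
  refine le_of_mul_le_mul_left ?_ h2
  refine h1.trans (le_of_eq ?_)
  ring

end ExponentialSum

section QuadraticSum

variable {K : Type*} [Field K] [NumberField K]

/-- Elements of `𝓞 K ⧸ q` whose square is `1` modulo a divisor `d` of `q`. -/
lemma card_sq_sub_one_mem_le {q d : Ideal (𝓞 K)} (hq : q ≠ 0) (hqd : q ≤ d) :
    Nat.card {v : 𝓞 K ⧸ q // Ideal.Quotient.factor hqd v ^ 2 = 1} * Ideal.absNorm d ≤
      Ideal.absNorm q * (Ideal.absNorm (Ideal.span {(2 : 𝓞 K)}) * 2 ^ omegaI d) := by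
  have hd : d ≠ 0 := fun h => hq (le_bot_iff.mp (by rwa [h] at hqd))
  have := finite_quotient hq
  have := finite_quotient hd
  have := Fintype.ofFinite (𝓞 K ⧸ q)
  have := Fintype.ofFinite (𝓞 K ⧸ d)
  set f : 𝓞 K ⧸ q →+ 𝓞 K ⧸ d := (Ideal.Quotient.factor hqd).toAddMonoidHom with hf
  have hsurj : Function.Surjective f := Ideal.Quotient.factor_surjective hqd
  have hker : Nat.card f.ker * Ideal.absNorm d = Ideal.absNorm q := by
    have h := AddSubgroup.card_mul_index f.ker
    rw [AddSubgroup.index_ker, AddMonoidHom.range_eq_top.mpr hsurj] at h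
    rw [← card_quotient d, ← card_quotient q, ← h]
    congr 1
    exact (Nat.card_congr AddSubgroup.topEquiv.toEquiv).symm
  have h1 : Nat.card {v : 𝓞 K ⧸ q // Ideal.Quotient.factor hqd v ^ 2 = 1} ≤
      Nat.card f.ker * Nat.card {u : 𝓞 K ⧸ d // u ^ 2 = 1} := by
    rw [Nat.card_eq_fintype_card, Fintype.card_subtype,
      Nat.card_eq_fintype_card (α := {u : 𝓞 K ⧸ d // u ^ 2 = 1}), Fintype.card_subtype]
    refine Finset.card_le_mul_card_image_of_maps_to (f := f) ?_ _ fun b _ => ?_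
    · intro v hv
      exact Finset.mem_filter.mpr ⟨Finset.mem_univ _, (Finset.mem_filter.mp hv).2⟩
    rcases Finset.eq_empty_or_nonempty ((Finset.univ.filter fun v : 𝓞 K ⧸ q =>
      Ideal.Quotient.factor hqd v ^ 2 = 1).filter fun v => f v = b) with he | ⟨w, hw⟩
    · rw [he]; simp
    have hker' : Nat.card f.ker = (Finset.univ.filter fun x : 𝓞 K ⧸ q => f x = 0).card := by
      rw [← Fintype.card_subtype, ← Nat.card_eq_fintype_card]
      rfl
    rw [hker']
    refine Finset.card_le_card_of_injOn (fun v => v - w) ?_ (fun x _ y _ h => sub_left_injective h)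
    intro v hv
    simp only [Finset.coe_filter, Finset.mem_filter, Finset.mem_univ, true_and,
      Set.mem_ofPred_eq] at hv hw ⊢
    rw [map_sub, hv.2, hw.2, sub_self]
  calc _ ≤ Nat.card f.ker * Nat.card {u : 𝓞 K ⧸ d // u ^ 2 = 1} * Ideal.absNorm d :=
        Nat.mul_le_mul_right _ h1
    _ = Ideal.absNorm q * Nat.card {u : 𝓞 K ⧸ d // u ^ 2 = 1} := by rw [← hker]; ring
    _ ≤ _ := Nat.mul_le_mul_left _ (card_sqrt_one_le hd)

lemma card_units_sqrt_one_le {q : Ideal (𝓞 K)} (hq : q ≠ 0) :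
    Nat.card {u : (𝓞 K ⧸ q)ˣ // u ^ 2 = 1} ≤
      Ideal.absNorm (Ideal.span {(2 : 𝓞 K)}) * 2 ^ omegaI q := by
  have := finite_quotient hq
  refine le_trans (Nat.card_le_card_of_injective
    (fun u : {u : (𝓞 K ⧸ q)ˣ // u ^ 2 = 1} =>
      (⟨(u.1 : 𝓞 K ⧸ q), by rw [← Units.val_pow_eq_pow_val, u.2, Units.val_one]⟩ :
        {u : 𝓞 K ⧸ q // u ^ 2 = 1})) ?_) (card_sqrt_one_le hq)
  intro u v h
  exact Subtype.ext (Units.ext (congrArg Subtype.val h))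

/-- The bound for the quadratic exponential sum modulo `q`, for a character of conductor at
most `d`. -/
lemma norm_squareSum_le_of_conductor {q d : Ideal (𝓞 K)} (hq : q ≠ 0) (hqd : q ≤ d)
    [Fintype (𝓞 K ⧸ q)] [Fintype (𝓞 K ⧸ q)ˣ] {c : 𝓞 K ⧸ q} (hc : IsUnit c)
    (ψ : AddChar (𝓞 K ⧸ q) ℂ)
    (hψ : ∀ y : 𝓞 K, (∀ x : 𝓞 K ⧸ q, ψ (Ideal.Quotient.mk q y * x) = 1) → y ∈ d) :
    ‖squareSum c ψ‖ ^ 2 * Ideal.absNorm d ≤ (Ideal.absNorm q : ℝ) ^ 2 *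
      (Ideal.absNorm (Ideal.span {(2 : 𝓞 K)}) : ℝ) ^ 2 * (numDiv d * numDiv q) := by
  set k := Nat.card {v : 𝓞 K ⧸ q // Ideal.Quotient.factor hqd v ^ 2 = 1} with hk
  set T := Ideal.absNorm (Ideal.span {(2 : 𝓞 K)})
  have hstab : Nat.card {v : (𝓞 K ⧸ q)ˣ // ψ.mulShift ((v : 𝓞 K ⧸ q) ^ 2) = ψ} ≤ k := by
    have hmem : ∀ v : {v : (𝓞 K ⧸ q)ˣ // ψ.mulShift ((v : 𝓞 K ⧸ q) ^ 2) = ψ},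
        Ideal.Quotient.factor hqd (v.1 : 𝓞 K ⧸ q) ^ 2 = 1 := by
      rintro ⟨v, hv⟩
      obtain ⟨y, hy⟩ := Ideal.Quotient.mk_surjective (v : 𝓞 K ⧸ q)
      have hyd : y ^ 2 - 1 ∈ d := by
        refine hψ _ fun x => ?_
        have h1 : ψ ((v : 𝓞 K ⧸ q) ^ 2 * x) = ψ x := by
          rw [← AddChar.mulShift_apply, hv]
        rw [map_sub, map_pow, map_one, hy, sub_mul, one_mul, AddChar.map_sub_eq_div, h1,
          div_self (ψ.val_isUnit x).ne_zero]
      change Ideal.Quotient.factor hqd (v : 𝓞 K ⧸ q) ^ 2 = 1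
      rw [← hy, Ideal.Quotient.factor_mk, ← map_pow, ← sub_eq_zero, ← map_one (Ideal.Quotient.mk d),
        ← map_sub, Ideal.Quotient.eq_zero_iff_mem]
      exact hyd
    refine Nat.card_le_card_of_injective (fun v => ⟨_, hmem v⟩) ?_
    intro u v h
    exact Subtype.ext (Units.ext (congrArg Subtype.val h))
  have h1 := norm_squareSum_sq_le hc ψ hstab
  have h2 : k * Ideal.absNorm d ≤ Ideal.absNorm q * (T * numDiv d) :=
    (card_sq_sub_one_mem_le hq hqd).trans
      (Nat.mul_le_mul_left _ (Nat.mul_le_mul_left _ (two_pow_omegaI_le d)))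
  have h3 : Nat.card {u : (𝓞 K ⧸ q)ˣ // u ^ 2 = 1} ≤ T * numDiv q :=
    (card_units_sqrt_one_le hq).trans (Nat.mul_le_mul_left _ (two_pow_omegaI_le q))
  have h4 : Fintype.card (𝓞 K ⧸ q) = Ideal.absNorm q := by
    rw [← card_quotient, Nat.card_eq_fintype_card]
  rw [h4] at h1
  have h2' : (k : ℝ) * Ideal.absNorm d ≤ Ideal.absNorm q * (T * numDiv d) := by exact_mod_cast h2
  have h3' : (Nat.card {u : (𝓞 K ⧸ q)ˣ // u ^ 2 = 1} : ℝ) ≤ T * numDiv q := by exact_mod_cast h3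
  calc ‖squareSum c ψ‖ ^ 2 * Ideal.absNorm d
      ≤ (k * (Ideal.absNorm q * Nat.card {u : (𝓞 K ⧸ q)ˣ // u ^ 2 = 1})) * Ideal.absNorm d := by
        gcongr
    _ = (k * Ideal.absNorm d) * (Ideal.absNorm q * Nat.card {u : (𝓞 K ⧸ q)ˣ // u ^ 2 = 1}) := by
        ring
    _ ≤ (Ideal.absNorm q * (T * numDiv d)) * (Ideal.absNorm q * (T * numDiv q)) := by gcongr
    _ = _ := by ring

end QuadraticSum
end QCircle

/-! ### The decay function over a square lattice -/

namespace QCircle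

section LatticeSums

/-- A telescoping majorant of `k^{-1/2} min(1, (Y/k)^{3/2})`, whose limit is `√Y`. -/
noncomputable def pot (Y x : ℝ) : ℝ := Real.sqrt (x * Y / (x + Y))

lemma pot_le {Y x : ℝ} (hY : 0 < Y) (hx : 0 ≤ x) : pot Y x ≤ Real.sqrt Y := by
  refine Real.sqrt_le_sqrt ?_
  rw [div_le_iff₀ (by positivity)]
  nlinarith

lemma term_le_pot_sub {Y : ℝ} (hY : 0 < Y) {k : ℝ} (hk : 1 ≤ k) :
    k * (k ^ (-(3 / 2) : ℝ) * min 1 ((k / Y) ^ (-(3 / 2) : ℝ))) ≤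
      6 * (pot Y k - pot Y (k - 1)) := by
  have hk0 : 0 < k := by linarith
  set x : ℝ := Y / (k + Y) with hx
  have hx0 : 0 < x := by positivity
  set s := Real.sqrt x with hs
  set κ := Real.sqrt k with hκ
  have hs0 : 0 < s := Real.sqrt_pos.mpr hx0
  have hκ0 : 0 < κ := Real.sqrt_pos.mpr hk0
  have hs2 : s ^ 2 = x := Real.sq_sqrt hx0.le
  have hκ2 : κ ^ 2 = k := Real.sq_sqrt hk0.le
  have hrpow : ∀ u : ℝ, 0 < u → u ^ (3 / 2 : ℝ) = u * Real.sqrt u := by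
    intro u hu
    rw [show (3 / 2 : ℝ) = 1 + 1 / 2 by norm_num, Real.rpow_add hu, Real.rpow_one,
      Real.sqrt_eq_rpow]
  have hmin : min 1 ((k / Y) ^ (-(3 / 2) : ℝ)) ≤ 3 * (x * s) := by
    have h1 : min 1 ((k / Y) ^ (-(3 / 2) : ℝ)) ≤ (2 * x) ^ (3 / 2 : ℝ) := by
      rcases le_total k Y with h | h
      · refine (min_le_left _ _).trans (Real.one_le_rpow ?_ (by norm_num))
        rw [hx, mul_div_assoc', le_div_iff₀ (by positivity)]
        linarith
      · refine (min_le_right _ _).trans ?_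
        rw [Real.rpow_neg (by positivity), ← Real.inv_rpow (by positivity)]
        refine Real.rpow_le_rpow (by positivity) ?_ (by norm_num)
        rw [inv_div, hx, mul_div_assoc', div_le_div_iff₀ hk0 (by positivity)]
        nlinarith
    refine h1.trans ?_
    rw [hrpow _ (by positivity), Real.sqrt_mul (by norm_num)]
    have h2 : Real.sqrt 2 ≤ 3 / 2 := by
      rw [Real.sqrt_le_left (by norm_num)]; norm_num
    have : 0 < x * s := by positivity
    nlinarith
  have hterm : k * k ^ (-(3 / 2) : ℝ) = 1 / κ := by
    rw [Real.rpow_neg hk0.le, hrpow k hk0, ← hκ]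
    field_simp
  have hP : pot Y k = κ * s := by
    rw [pot, mul_div_assoc, Real.sqrt_mul hk0.le]
  have hlow : x * s / (2 * κ) ≤ pot Y k - pot Y (k - 1) := by
    have hm : 0 ≤ pot Y (k - 1) := Real.sqrt_nonneg _
    have hPk : 0 < pot Y k := by rw [hP]; positivity
    have hmono : pot Y (k - 1) ≤ pot Y k := by
      refine Real.sqrt_le_sqrt ?_
      rw [div_le_div_iff₀ (by linarith) (by linarith)]
      nlinarith [sq_nonneg Y, mul_pos hY hY]
    have hsq : pot Y k ^ 2 - pot Y (k - 1) ^ 2 = x * (Y / (k - 1 + Y)) := by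
      have : 0 < k - 1 + Y := by linarith
      rw [pot, pot, Real.sq_sqrt (by positivity), Real.sq_sqrt
        (div_nonneg (mul_nonneg (by linarith) hY.le) this.le), hx]
      field_simp
      ring
    have hge : x ^ 2 ≤ pot Y k ^ 2 - pot Y (k - 1) ^ 2 := by
      rw [hsq, sq]
      gcongr
      rw [hx]
      gcongr
      linarith
    have h1 : x ^ 2 ≤ (pot Y k - pot Y (k - 1)) * (2 * pot Y k) := by nlinarith
    have h2 : x ^ 2 / (2 * pot Y k) ≤ pot Y k - pot Y (k - 1) := by
      rwa [div_le_iff₀ (by positivity)]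
    refine le_trans (le_of_eq ?_) h2
    rw [hP, ← hs2]
    field_simp
  calc k * (k ^ (-(3 / 2) : ℝ) * min 1 ((k / Y) ^ (-(3 / 2) : ℝ)))
      = 1 / κ * min 1 ((k / Y) ^ (-(3 / 2) : ℝ)) := by rw [← mul_assoc, hterm]
    _ ≤ 1 / κ * (3 * (x * s)) := by gcongr
    _ = 6 * (x * s / (2 * κ)) := by field_simp; norm_num
    _ ≤ _ := by gcongr

/-- The decay of the Fourier transform of the smoothed disc. -/
noncomputable def decay (δ y : ℝ) : ℝ :=
  y ^ (-(3 / 2) : ℝ) * min 1 ((δ * y) ^ (-(3 / 2) : ℝ))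

lemma decay_nonneg {δ y : ℝ} (hδ : 0 ≤ δ) (hy : 0 ≤ y) : 0 ≤ decay δ y := by
  unfold decay; positivity

lemma decay_anti {δ x y : ℝ} (hδ : 0 < δ) (hx : 0 < x) (hxy : x ≤ y) :
    decay δ y ≤ decay δ x := by
  unfold decay
  have h1 : y ^ (-(3 / 2) : ℝ) ≤ x ^ (-(3 / 2) : ℝ) :=
    Real.rpow_le_rpow_of_nonpos hx hxy (by norm_num)
  have h2 : (δ * y) ^ (-(3 / 2) : ℝ) ≤ (δ * x) ^ (-(3 / 2) : ℝ) :=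
    Real.rpow_le_rpow_of_nonpos (by positivity) (by gcongr) (by norm_num)
  have hy : 0 < y := hx.trans_le hxy
  gcongr

lemma mul_decay_le {B δ : ℝ} (hB : 0 < B) (hδ : 0 < δ) {k : ℝ} (hk : 1 ≤ k) :
    k * decay δ (k / B) ≤ B ^ (3 / 2 : ℝ) * (6 * (pot (B / δ) k - pot (B / δ) (k - 1))) := by
  have hk0 : 0 < k := by linarith
  have h := term_le_pot_sub (Y := B / δ) (by positivity) hk
  have e1 : k * decay δ (k / B) = B ^ (3 / 2 : ℝ) * (k * (k ^ (-(3 / 2) : ℝ) *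
      min 1 ((k / (B / δ)) ^ (-(3 / 2) : ℝ)))) := by
    rw [decay, Real.div_rpow hk0.le hB.le, Real.rpow_neg hB.le, div_inv_eq_mul,
      show δ * (k / B) = k / (B / δ) by field_simp]
    ring
  rw [e1]
  gcongr

/-- The sup norm of an integer point of the plane. -/
def supAbs (m : ℤ × ℤ) : ℕ := max m.1.natAbs m.2.natAbs

/-- The decay function summed over the nonzero points of a square lattice of mesh `1 / B`. -/
lemma sum_decay_le {B δ : ℝ} (hB : 0 < B) (hδ : 0 < δ) (S : Finset (ℤ × ℤ)) (hS : 0 ∉ S) :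
    ∑ m ∈ S, decay δ ((supAbs m : ℝ) / B) ≤ 48 * B ^ 2 * δ ^ (-(1 / 2) : ℝ) := by
  set n := S.sup supAbs
  set Y := B / δ with hY
  have hY0 : 0 < Y := by positivity
  have hmaps : ∀ m ∈ S, supAbs m ∈ Finset.range (n + 1) := fun m hm =>
    Finset.mem_range.mpr (Nat.lt_succ_of_le (Finset.le_sup hm))
  rw [← Finset.sum_fiberwise_of_maps_to hmaps, Finset.sum_range_succ']
  have hzero : ∑ m ∈ S with supAbs m = 0, decay δ ((supAbs m : ℝ) / B) = 0 := by
    refine Finset.sum_eq_zero fun m hm => ?_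
    obtain ⟨h1, h2⟩ := Finset.mem_filter.mp hm
    refine absurd ?_ hS
    have : m = 0 := by
      unfold supAbs at h2
      apply Prod.ext
      · simp only [Prod.fst_zero]; omega
      · simp only [Prod.snd_zero]; omega
    rwa [this] at h1
  rw [hzero, add_zero]
  have hk : ∀ k ∈ Finset.range n, ∑ m ∈ S with supAbs m = k + 1, decay δ ((supAbs m : ℝ) / B) ≤
      48 * B ^ (3 / 2 : ℝ) * (pot Y ((k + 1 : ℕ) : ℝ) - pot Y ((k : ℕ) : ℝ)) := by
    intro k _
    have h1 : ∀ m ∈ S.filter (fun m => supAbs m = k + 1), decay δ ((supAbs m : ℝ) / B) =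
        decay δ (((k + 1 : ℕ) : ℝ) / B) := fun m hm => by rw [(Finset.mem_filter.mp hm).2]
    rw [Finset.sum_congr rfl h1, Finset.sum_const, nsmul_eq_mul]
    have h2 : (S.filter (fun m => supAbs m = k + 1)).card ≤ 8 * (k + 1) := by
      rw [← Int.card_box (Nat.succ_ne_zero k)]
      refine Finset.card_le_card fun m hm => ?_
      rw [Int.mem_box]
      exact (Finset.mem_filter.mp hm).2
    have h3 := mul_decay_le hB hδ (k := ((k + 1 : ℕ) : ℝ)) (by push_cast; linarith [k.cast_nonneg (α := ℝ)])
    have h4 : 0 ≤ decay δ (((k + 1 : ℕ) : ℝ) / B) := decay_nonneg hδ.le (by positivity)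
    calc _ ≤ ((8 * (k + 1) : ℕ) : ℝ) * decay δ (((k + 1 : ℕ) : ℝ) / B) := by gcongr
      _ = 8 * (((k + 1 : ℕ) : ℝ) * decay δ (((k + 1 : ℕ) : ℝ) / B)) := by push_cast; ring
      _ ≤ 8 * (B ^ (3 / 2 : ℝ) * (6 * (pot (B / δ) ((k + 1 : ℕ) : ℝ) -
            pot (B / δ) (((k + 1 : ℕ) : ℝ) - 1)))) := by gcongr
      _ = _ := by
        rw [show (((k + 1 : ℕ) : ℝ) - 1) = (k : ℝ) by push_cast; ring, ← hY]
        ring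
  refine (Finset.sum_le_sum hk).trans ?_
  rw [← Finset.mul_sum, Finset.sum_range_sub (fun k : ℕ => pot Y (k : ℝ))]
  have h5 : pot Y (n : ℝ) - pot Y ((0 : ℕ) : ℝ) ≤ Real.sqrt Y := by
    have := pot_le hY0 (Nat.cast_nonneg (α := ℝ) n)
    have h0 : 0 ≤ pot Y ((0 : ℕ) : ℝ) := Real.sqrt_nonneg _
    linarith
  calc _ ≤ 48 * B ^ (3 / 2 : ℝ) * Real.sqrt Y := by gcongr
    _ = 48 * (B ^ (3 / 2 : ℝ) * B ^ (1 / 2 : ℝ)) * δ ^ (-(1 / 2) : ℝ) := by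
      rw [hY, Real.sqrt_eq_rpow, Real.div_rpow hB.le hδ.le, Real.rpow_neg hδ.le]
      ring
    _ = _ := by
      rw [← Real.rpow_add hB]
      norm_num

end LatticeSums
end QCircle

/-! ### Frequencies and their conductors -/

namespace QCircle

section Frequencies

variable {K : Type*} [Field K] [NumberField K] (ι : K →+* ℂ)

lemma eq_zero_of_inner_eq_zero {z θ w : ℂ} (hz : z ≠ 0) (hθ : θ.im ≠ 0)
    (h1 : inner ℝ z w = 0) (h2 : inner ℝ (θ * z) w = 0) : w = 0 := by
  rw [inner_complex] at h1 h2
  simp only [Complex.mul_re, Complex.mul_im] at h2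
  have h3 : z.re * w.im - z.im * w.re = 0 := by
    have : θ.im * (z.re * w.im - z.im * w.re) = 0 := by linear_combination h2 - θ.re * h1
    exact (mul_eq_zero.mp this).resolve_left hθ
  have hn : z.re ^ 2 + z.im ^ 2 ≠ 0 := by
    intro h
    refine hz (Complex.ext ?_ ?_) <;> simp only [Complex.zero_re, Complex.zero_im] <;>
      nlinarith [sq_nonneg z.re, sq_nonneg z.im]
  refine Complex.ext ?_ ?_
  · have : (z.re ^ 2 + z.im ^ 2) * w.re = 0 := by linear_combination z.re * h1 - z.im * h3
    simpa using (mul_eq_zero.mp this).resolve_left hn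
  · have : (z.re ^ 2 + z.im ^ 2) * w.im = 0 := by linear_combination z.im * h1 + z.re * h3
    simpa using (mul_eq_zero.mp this).resolve_left hn

/-- The ideal of those `x` for which `x • a` pairs integrally with the frequency `w`. For `w` in
the dual lattice of `a * q` this is the conductor of the character that `w` defines. -/
noncomputable def freqIdeal (a : Ideal (𝓞 K)) (w : ℂ) : Ideal (𝓞 K) where
  carrier := {x | ∀ y ∈ a, ∃ k : ℤ, inner ℝ (emb ι (x * y)) w = k}
  add_mem' := by
    intro x x' hx hx' y hy
    obtain ⟨k, hk⟩ := hx y hy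
    obtain ⟨l, hl⟩ := hx' y hy
    exact ⟨k + l, by rw [add_mul, map_add, inner_add_left, hk, hl]; push_cast; rfl⟩
  zero_mem' := by
    intro y _
    exact ⟨0, by simp⟩
  smul_mem' := by
    intro c x hx y hy
    obtain ⟨k, hk⟩ := hx (c * y) (a.mul_mem_left c hy)
    exact ⟨k, by rw [← hk, smul_eq_mul]; congr 2; ring⟩

variable {ι} in
lemma exists_int_of_mem_mul {a d : Ideal (𝓞 K)} {w : ℂ} (hd : d ≤ freqIdeal ι a w) {z : 𝓞 K}
    (hz : z ∈ a * d) : ∃ k : ℤ, inner ℝ (emb ι z) w = k := by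
  refine Submodule.mul_induction_on hz (fun y hy x hx => ?_) ?_
  · obtain ⟨k, hk⟩ := hd hx y hy
    exact ⟨k, by rw [← hk, mul_comm]⟩
  · rintro x y ⟨k, hk⟩ ⟨l, hl⟩
    exact ⟨k + l, by rw [map_add, inner_add_left, hk, hl]; push_cast; rfl⟩

variable (hdeg : Module.finrank ℚ K = 2) (himag : ∀ v : InfinitePlace K, v.IsComplex)
include hdeg himag

/-- The frequencies whose conductor contains `d` lie in a lattice that pairs integrally with `j`
and `θ * j`, where `j` is a short vector of `a * d`; the pair of integers so obtained embeds this
lattice into `ℤ²` with control on the norm. -/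
lemma sum_decay_freq_le : ∃ C : ℝ, 0 < C ∧ ∀ a d : Ideal (𝓞 K), a ≠ 0 → d ≠ 0 → ∀ δ : ℝ, 0 < δ →
    ∀ F : Finset ℂ, (∀ w ∈ F, w ≠ 0 ∧ d ≤ freqIdeal ι a w) →
    ∑ w ∈ F, decay δ ‖w‖ ≤
      C * ((Ideal.absNorm a : ℝ) * Ideal.absNorm d) * δ ^ (-(1 / 2) : ℝ) := by
  obtain ⟨M, hM, hshort⟩ := exists_short_vector ι hdeg himag
  obtain ⟨θ, hθ⟩ := exists_im_ne_zero ι hdeg himag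
  refine ⟨48 * (M * (1 + ‖emb ι θ‖)) ^ 2, by positivity, fun a d ha hd δ hδ F hF => ?_⟩
  have had : a * d ≠ 0 := mul_ne_zero ha hd
  have hN : (0 : ℝ) < Ideal.absNorm (a * d) := by
    exact_mod_cast Nat.pos_of_ne_zero (mt Ideal.absNorm_eq_zero_iff.mp had)
  obtain ⟨j, hj, hj0, hjM⟩ := hshort (a * d) had
  set s := Real.sqrt (Ideal.absNorm (a * d)) with hs
  have hs0 : 0 < s := Real.sqrt_pos.mpr hN
  set B := M * (1 + ‖emb ι θ‖) * s with hB
  have hB0 : 0 < B := by positivity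
  have hej : emb ι j ≠ 0 := fun h => hj0 (emb_injective ι (by rw [h, map_zero]))
  set m : ℂ → ℤ × ℤ := fun w => (⌊inner ℝ (emb ι j) w⌋, ⌊inner ℝ (emb ι (θ * j)) w⌋) with hm
  have hm1 : ∀ w ∈ F, inner ℝ (emb ι j) w = ((m w).1 : ℝ) := by
    intro w hw
    obtain ⟨k, hk⟩ := exists_int_of_mem_mul (hF w hw).2 hj
    simp only [hm, hk, Int.floor_intCast]
  have hm2 : ∀ w ∈ F, inner ℝ (emb ι θ * emb ι j) w = ((m w).2 : ℝ) := by
    intro w hw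
    obtain ⟨k, hk⟩ := exists_int_of_mem_mul (hF w hw).2 ((a * d).mul_mem_left θ hj)
    rw [← map_mul]
    simp only [hm, hk, Int.floor_intCast]
  have hinj : Set.InjOn m F := by
    intro w hw w' hw' h
    refine sub_eq_zero.mp (eq_zero_of_inner_eq_zero hej hθ ?_ ?_)
    · rw [inner_sub_right, hm1 w hw, hm1 w' hw', h, sub_self]
    · rw [inner_sub_right, hm2 w hw, hm2 w' hw', h, sub_self]
  have hne : ∀ w ∈ F, m w ≠ 0 := by
    intro w hw h
    refine (hF w hw).1 (eq_zero_of_inner_eq_zero hej hθ ?_ ?_)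
    · rw [hm1 w hw, h]; simp
    · rw [hm2 w hw, h]; simp
  have hle : ∀ w ∈ F, (supAbs (m w) : ℝ) ≤ B * ‖w‖ := by
    intro w hw
    have hθ0 : 0 ≤ ‖emb ι θ‖ := norm_nonneg _
    have hw0 : 0 ≤ ‖w‖ := norm_nonneg _
    have e1 : (((m w).1.natAbs : ℕ) : ℝ) ≤ B * ‖w‖ := by
      rw [Nat.cast_natAbs, Int.cast_abs, ← hm1 w hw]
      refine (abs_real_inner_le_norm _ _).trans ?_
      gcongr
      rw [hB]
      nlinarith [mul_nonneg (mul_nonneg hM.le hθ0) hs0.le]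
    have e2 : (((m w).2.natAbs : ℕ) : ℝ) ≤ B * ‖w‖ := by
      rw [Nat.cast_natAbs, Int.cast_abs, ← hm2 w hw]
      refine (abs_real_inner_le_norm _ _).trans ?_
      gcongr
      rw [norm_mul, hB]
      nlinarith [mul_le_mul_of_nonneg_left hjM hθ0, mul_pos hM hs0]
    unfold supAbs
    rw [Nat.cast_max]
    exact max_le e1 e2
  have hpos : ∀ w ∈ F, (0 : ℝ) < supAbs (m w) := by
    intro w hw
    have : supAbs (m w) ≠ 0 := by
      intro h
      refine hne w hw (Prod.ext ?_ ?_) <;> simp only [Prod.fst_zero, Prod.snd_zero] <;>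
        unfold supAbs at h <;> omega
    exact_mod_cast Nat.pos_of_ne_zero this
  calc ∑ w ∈ F, decay δ ‖w‖ ≤ ∑ w ∈ F, decay δ ((supAbs (m w) : ℝ) / B) := by
        refine Finset.sum_le_sum fun w hw => decay_anti hδ (div_pos (hpos w hw) hB0) ?_
        rw [div_le_iff₀ hB0, mul_comm]
        exact hle w hw
    _ = ∑ x ∈ F.image m, decay δ ((supAbs x : ℝ) / B) :=
        (Finset.sum_image (f := fun x => decay δ ((supAbs x : ℝ) / B)) hinj).symm
    _ ≤ 48 * B ^ 2 * δ ^ (-(1 / 2) : ℝ) := by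
        refine sum_decay_le hB0 hδ _ fun h => ?_
        obtain ⟨w, hw, h⟩ := Finset.mem_image.mp h
        exact hne w hw h
    _ = _ := by
        rw [hB, mul_pow _ s, hs, Real.sq_sqrt hN.le, map_mul]
        push_cast
        ring

end Frequencies
end QCircle

/-! ### Characters of frequencies -/

namespace QCircle

section Characters
open Complex

/-- The additive character `s ↦ exp (2πis)` of the real line. -/
noncomputable def chi (s : ℝ) : ℂ := cexp (((2 * Real.pi * s : ℝ) : ℂ) * I)

lemma chi_add (s t : ℝ) : chi (s + t) = chi s * chi t := by
  rw [chi, chi, chi, ← Complex.exp_add]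
  congr 1
  push_cast
  ring

lemma chi_intCast (k : ℤ) : chi (k : ℝ) = 1 := by
  rw [chi, Complex.exp_eq_one_iff]
  exact ⟨k, by push_cast; ring⟩

lemma exists_int_of_chi_eq_one {s : ℝ} (h : chi s = 1) : ∃ k : ℤ, s = k := by
  rw [chi, Complex.exp_eq_one_iff] at h
  obtain ⟨k, hk⟩ := h
  refine ⟨k, ?_⟩
  have hpi : (2 * (Real.pi : ℂ) * I) ≠ 0 := Complex.two_pi_I_ne_zero
  have : (s : ℂ) = (k : ℂ) := by
    apply mul_right_cancel₀ hpi
    rw [← hk]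
    push_cast
    ring
  exact_mod_cast this

variable {K : Type*} [Field K] [NumberField K] (ι : K →+* ℂ)

/-- A frequency `w` of the dual lattice of `a * q`, read on the residue classes modulo `q` through
a representative of `1` in `a`, is an additive character with conductor `freqIdeal ι a w`. -/
lemma exists_char {a q : Ideal (𝓞 K)} {w : ℂ}
    (hw : ∀ x ∈ a * q, ∃ k : ℤ, inner ℝ (emb ι x) w = k) {e : 𝓞 K} (he : e ∈ a)
    (he1 : 1 - e ∈ q) :
    ∃ ψ : AddChar (𝓞 K ⧸ q) ℂ,
      (∀ x, ψ (Ideal.Quotient.mk q x) = chi (inner ℝ (emb ι (e * x)) w)) ∧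
      ∀ y, (∀ x, ψ (Ideal.Quotient.mk q y * x) = 1) → y ∈ freqIdeal ι a w := by
  have hcongr : ∀ x y : 𝓞 K, x - y ∈ q →
      chi (inner ℝ (emb ι (e * x)) w) = chi (inner ℝ (emb ι (e * y)) w) := by
    intro x y hxy
    obtain ⟨k, hk⟩ := hw (e * (x - y)) (Ideal.mul_mem_mul he hxy)
    have : e * x = e * (x - y) + e * y := by ring
    rw [this, map_add, inner_add_left, chi_add, hk, chi_intCast, one_mul]
  have hmk : ∀ x : 𝓞 K, (Quotient.out (Ideal.Quotient.mk q x)) - x ∈ q := fun x =>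
    Ideal.Quotient.eq.mp (Quotient.out_eq (Ideal.Quotient.mk q x))
  have hval : ∀ x : 𝓞 K, chi (inner ℝ (emb ι (e * Quotient.out (Ideal.Quotient.mk q x))) w) =
      chi (inner ℝ (emb ι (e * x)) w) := fun x => hcongr _ _ (hmk x)
  let ψ : AddChar (𝓞 K ⧸ q) ℂ :=
    { toFun := fun x => chi (inner ℝ (emb ι (e * Quotient.out x)) w)
      map_zero_eq_one' := by
        have := hval 0
        rw [map_zero] at this
        rw [this, mul_zero, map_zero, inner_zero_left]
        simpa using chi_intCast 0
      map_add_eq_mul' := by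
        intro x y
        obtain ⟨x, rfl⟩ := Ideal.Quotient.mk_surjective x
        obtain ⟨y, rfl⟩ := Ideal.Quotient.mk_surjective y
        rw [← map_add, hval, hval, hval, mul_add, map_add, inner_add_left, chi_add] }
  refine ⟨ψ, hval, fun y hy z hz => ?_⟩
  have h1 := hy (Ideal.Quotient.mk q z)
  rw [← map_mul] at h1
  obtain ⟨k, hk⟩ := exists_int_of_chi_eq_one ((hval (y * z)).symm.trans h1)
  obtain ⟨l, hl⟩ := hw (y * z * (1 - e)) (Ideal.mul_mem_mul (a.mul_mem_left y hz) he1)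
  refine ⟨k + l, ?_⟩
  rw [show y * z = e * (y * z) + y * z * (1 - e) by ring, map_add, inner_add_left, hk, hl]
  push_cast
  rfl

variable (hdeg : Module.finrank ℚ K = 2) (himag : ∀ v : InfinitePlace K, v.IsComplex)
include hdeg himag

lemma sum_mul_decay_le {ε : ℝ} (hε : 0 < ε) : ∃ C : ℝ, 0 < C ∧
    ∀ a q : Ideal (𝓞 K), a ≠ 0 → q ≠ 0 → ∀ δ : ℝ, 0 < δ → ∀ F : Finset ℂ,
    (∀ w ∈ F, w ≠ 0 ∧ q ≤ freqIdeal ι a w) → ∀ S : ℂ → ℝ,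
    (∀ w ∈ F, S w ^ 2 * Ideal.absNorm (freqIdeal ι a w) ≤ (Ideal.absNorm q : ℝ) ^ 2 *
      (Ideal.absNorm (Ideal.span {(2 : 𝓞 K)}) : ℝ) ^ 2 *
        (numDiv (freqIdeal ι a w) * numDiv q)) →
    ∑ w ∈ F, S w * decay δ ‖w‖ ≤
      C * (Ideal.absNorm a * Ideal.absNorm q * (Ideal.absNorm q : ℝ) ^ (1 / 2 + ε)) *
        δ ^ (-(1 / 2) : ℝ) := by
  obtain ⟨C₁, hC₁, h₁⟩ := sum_decay_freq_le ι hdeg himag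
  obtain ⟨C₂, hC₂, h₂⟩ := numDiv_le K (ε := ε / 2) (by positivity)
  set N₂ : ℝ := (Ideal.absNorm (Ideal.span {(2 : 𝓞 K)}) : ℝ) with hN₂
  have hN₂0 : 0 < N₂ := by
    rw [hN₂]
    exact_mod_cast Nat.pos_of_ne_zero (mt Ideal.absNorm_eq_zero_iff.mp (by simp))
  refine ⟨C₂ * (N₂ * C₂ * C₁), by positivity, fun a q ha hq δ hδ F hF S hS => ?_⟩
  set Q : ℝ := (Ideal.absNorm q : ℝ) with hQ
  have hQ1 : 1 ≤ Q := by
    rw [hQ]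
    exact_mod_cast Nat.pos_of_ne_zero (mt Ideal.absNorm_eq_zero_iff.mp hq)
  have hQ0 : 0 < Q := by linarith
  have hd0 : ∀ d : Ideal (𝓞 K), q ≤ d → d ≠ 0 := fun d hd h => hq (le_bot_iff.mp (by rwa [h] at hd))
  have hdQ : ∀ d : Ideal (𝓞 K), q ≤ d → (1 : ℝ) ≤ Ideal.absNorm d ∧ (Ideal.absNorm d : ℝ) ≤ Q := by
    intro d hd
    have h1 := Nat.pos_of_ne_zero (mt Ideal.absNorm_eq_zero_iff.mp (hd0 d hd))
    have h2 := Nat.le_of_dvd (Nat.pos_of_ne_zero (mt Ideal.absNorm_eq_zero_iff.mp hq))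
      (Ideal.absNorm_dvd_absNorm_of_le hd)
    exact ⟨by exact_mod_cast h1, by rw [hQ]; exact_mod_cast h2⟩
  set T := (divisors_finite hq).1.toFinset with hT
  have hTcard : (T.card : ℝ) ≤ C₂ * Q ^ (ε / 2) := by
    refine le_trans ?_ (h₂ q hq)
    have := (divisors_finite hq).2
    rw [Set.ncard_eq_toFinset_card _ (divisors_finite hq).1] at this
    exact_mod_cast this
  have hmaps : ∀ w ∈ F, freqIdeal ι a w ∈ T := fun w hw => by
    rw [hT, Set.Finite.mem_toFinset]
    exact (hF w hw).2
  have hSle : ∀ w ∈ F, S w ≤ Q * N₂ * (C₂ * Q ^ (ε / 2)) /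
      Real.sqrt (Ideal.absNorm (freqIdeal ι a w)) := by
    intro w hw
    obtain ⟨hd1, hd2⟩ := hdQ _ (hF w hw).2
    rw [le_div_iff₀ (Real.sqrt_pos.mpr (by linarith))]
    refine le_of_sq_le_sq ?_ (by positivity) 
    rw [mul_pow, Real.sq_sqrt (by linarith)]
    refine (hS w hw).trans ?_
    have e1 : (numDiv (freqIdeal ι a w) : ℝ) ≤ C₂ * Q ^ (ε / 2) := by
      refine (h₂ _ (hd0 _ (hF w hw).2)).trans ?_
      gcongr
    have e2 : (numDiv q : ℝ) ≤ C₂ * Q ^ (ε / 2) := h₂ q hq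
    rw [mul_pow, mul_pow, sq (C₂ * _)]
    gcongr
  rw [← Finset.sum_fiberwise_of_maps_to hmaps]
  have hd : ∀ d ∈ T, ∑ w ∈ F with freqIdeal ι a w = d, S w * decay δ ‖w‖ ≤
      Q * N₂ * (C₂ * Q ^ (ε / 2)) * (C₁ * Ideal.absNorm a * Real.sqrt Q *
        δ ^ (-(1 / 2) : ℝ)) := by
    intro d hd
    have hqd : q ≤ d := by rwa [hT, Set.Finite.mem_toFinset] at hd
    obtain ⟨hd1, hd2⟩ := hdQ d hqd
    set s := Real.sqrt (Ideal.absNorm d) with hs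
    have hs0 : 0 < s := Real.sqrt_pos.mpr (by linarith)
    have hss : s * s = Ideal.absNorm d := Real.mul_self_sqrt (by linarith)
    have hsQ : s ≤ Real.sqrt Q := Real.sqrt_le_sqrt hd2
    calc ∑ w ∈ F with freqIdeal ι a w = d, S w * decay δ ‖w‖
        ≤ ∑ w ∈ F with freqIdeal ι a w = d,
            Q * N₂ * (C₂ * Q ^ (ε / 2)) / s * decay δ ‖w‖ := by
          refine Finset.sum_le_sum fun w hw => ?_
          obtain ⟨hw1, hw2⟩ := Finset.mem_filter.mp hw
          refine mul_le_mul_of_nonneg_right ?_ (decay_nonneg hδ.le (norm_nonneg _))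
          rw [hs, ← hw2]
          exact hSle w hw1
      _ = Q * N₂ * (C₂ * Q ^ (ε / 2)) / s *
            ∑ w ∈ F with freqIdeal ι a w = d, decay δ ‖w‖ := (Finset.mul_sum _ _ _).symm
      _ ≤ Q * N₂ * (C₂ * Q ^ (ε / 2)) / s *
            (C₁ * ((Ideal.absNorm a : ℝ) * Ideal.absNorm d) * δ ^ (-(1 / 2) : ℝ)) := by
          refine mul_le_mul_of_nonneg_left (h₁ a d ha (hd0 d hqd) δ hδ _ fun w hw => ?_)
            (by positivity)
          obtain ⟨hw1, hw2⟩ := Finset.mem_filter.mp hw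
          exact ⟨(hF w hw1).1, hw2.ge⟩
      _ = Q * N₂ * (C₂ * Q ^ (ε / 2)) * (C₁ * Ideal.absNorm a * s * δ ^ (-(1 / 2) : ℝ)) := by
          rw [← hss]
          field_simp
      _ ≤ _ := by gcongr
  refine (Finset.sum_le_sum hd).trans ?_
  rw [Finset.sum_const, nsmul_eq_mul]
  calc (T.card : ℝ) * _ ≤ C₂ * Q ^ (ε / 2) * (Q * N₂ * (C₂ * Q ^ (ε / 2)) *
        (C₁ * Ideal.absNorm a * Real.sqrt Q * δ ^ (-(1 / 2) : ℝ))) := by gcongr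
    _ = C₂ * (N₂ * C₂ * C₁) * (Ideal.absNorm a * Q *
        (Real.sqrt Q * (Q ^ (ε / 2) * Q ^ (ε / 2)))) * δ ^ (-(1 / 2) : ℝ) := by ring
    _ = _ := by
      rw [← Real.rpow_add hQ0, Real.sqrt_eq_rpow, ← Real.rpow_add hQ0, add_halves]

end Characters
end QCircle

/-! ### The smoothed count -/

namespace QCircle

section SmoothCount
open Complex FourierTransform Module

lemma dualVec_injective {b₀ b₁ : ℂ} (h : b₀.re * b₁.im - b₀.im * b₁.re ≠ 0) :
    Function.Injective (dualVec b₀ b₁) := by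
  intro n n' hn
  refine sub_eq_zero.mp (dualVec_eq_zero h ?_)
  have : dualVec b₀ b₁ (n - n') = dualVec b₀ b₁ n - dualVec b₀ b₁ n' := by
    refine Complex.ext ?_ ?_
    · simp only [dualVec, Complex.sub_re, Pi.sub_apply, Int.cast_sub]; ring
    · simp only [dualVec, Complex.sub_im, Pi.sub_apply, Int.cast_sub]; ring
  rw [this, hn, sub_self]

variable {K : Type*} [Field K] [NumberField K] (ι : K →+* ℂ)

lemma emb_basis {I : Ideal (𝓞 K)} (c : Basis (Fin 2) ℤ I) (m : Fin 2 → ℤ) :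
    emb ι ((c.equivFun.symm m : I) : 𝓞 K) =
      m 0 * emb ι (c 0 : 𝓞 K) + m 1 * emb ι (c 1 : 𝓞 K) := by
  rw [Basis.equivFun_symm_apply, Fin.sum_univ_two]
  simp

/-- The elements of `a` in a residue class modulo `q` form a translate of the lattice `a * q`. -/
lemma finsum_class {a q : Ideal (𝓞 K)} (hcop : a ⊔ q = ⊤)
    (c : Basis (Fin 2) ℤ (a * q : Ideal (𝓞 K))) {z₀ : 𝓞 K} (hz₀ : z₀ ∈ a) (g : ℂ → ℝ) :
    ∑ᶠ z : {z : 𝓞 K // z ∈ a ∧ Ideal.Quotient.mk q z = Ideal.Quotient.mk q z₀}, g (emb ι z) =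
      ∑ᶠ m : Fin 2 → ℤ, g (emb ι z₀ + (m 0 * emb ι (c 0 : 𝓞 K) + m 1 * emb ι (c 1 : 𝓞 K))) := by
  have hinf : a ⊓ q = a * q := Ideal.inf_eq_mul_of_isCoprime (Ideal.isCoprime_iff_sup_eq.mpr hcop)
  have hmem : ∀ m : Fin 2 → ℤ, z₀ + ((c.equivFun.symm m : (a * q : Ideal (𝓞 K))) : 𝓞 K) ∈ a ∧
      Ideal.Quotient.mk q (z₀ + ((c.equivFun.symm m : (a * q : Ideal (𝓞 K))) : 𝓞 K)) =
        Ideal.Quotient.mk q z₀ := by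
    intro m
    have h := hinf.ge (c.equivFun.symm m : (a * q : Ideal (𝓞 K))).2
    refine ⟨a.add_mem hz₀ h.1, ?_⟩
    rw [map_add, Ideal.Quotient.eq_zero_iff_mem.mpr h.2, add_zero]
  symm
  refine finsum_eq_of_bijective (fun m => ⟨_, hmem m⟩) ⟨?_, ?_⟩ ?_
  · intro m m' h
    have h1 := congrArg Subtype.val h
    simp only [add_right_inj] at h1
    exact c.equivFun.symm.injective (Subtype.ext h1)
  · rintro ⟨z, hz1, hz2⟩
    have hz : z - z₀ ∈ a * q := by
      rw [← hinf]
      exact ⟨a.sub_mem hz1 hz₀, Ideal.Quotient.eq.mp hz2⟩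
    refine ⟨c.equivFun ⟨z - z₀, hz⟩, Subtype.ext ?_⟩
    simp
  · intro m
    simp only
    rw [map_add, emb_basis]

lemma inner_dualVec_int {I : Ideal (𝓞 K)} (c : Basis (Fin 2) ℤ I)
    (h : (emb ι (c 0 : 𝓞 K)).re * (emb ι (c 1 : 𝓞 K)).im -
      (emb ι (c 0 : 𝓞 K)).im * (emb ι (c 1 : 𝓞 K)).re ≠ 0) (n : Fin 2 → ℤ) :
    ∀ x ∈ I, ∃ k : ℤ,
      inner ℝ (emb ι x) (dualVec (emb ι (c 0 : 𝓞 K)) (emb ι (c 1 : 𝓞 K)) n) = k := by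
  intro x hx
  have hx' : x = ((c.equivFun.symm (c.equivFun ⟨x, hx⟩) : I) : 𝓞 K) := by simp
  set m := c.equivFun ⟨x, hx⟩
  refine ⟨m 0 * n 0 + m 1 * n 1, ?_⟩
  rw [hx', emb_basis, inner_add_left]
  have h0 := inner_dualVec_zero h n
  have h1 := inner_dualVec_one h n
  have hs : ∀ (k : ℤ) (z w : ℂ), inner ℝ ((k : ℂ) * z) w = k * inner ℝ z w := by
    intro k z w
    rw [inner_complex, inner_complex]
    simp
    ring
  rw [hs, hs, h0, h1]
  push_cast
  rfl

lemma ofReal_finsum_smoothDiscR (r δ : ℝ) {β : Type*} (p : β → ℂ) :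
    ((∑ᶠ m, smoothDiscR r δ (p m) : ℝ) : ℂ) = ∑ᶠ m, smoothDisc r δ (p m) := by
  simp_rw [smoothDisc_eq_ofReal]
  exact AddMonoidHom.map_finsum_of_injective Complex.ofRealHom.toAddMonoidHom
    Complex.ofReal_injective _

omit [NumberField K] in
lemma isUnit_mk {q : Ideal (𝓞 K)} {α : 𝓞 K} (hα : Ideal.span {α} ⊔ q = ⊤) :
    IsUnit (Ideal.Quotient.mk q α) := by
  obtain ⟨x, hx, y, hy, hxy⟩ :=
    Submodule.mem_sup.mp (hα ▸ Submodule.mem_top : (1 : 𝓞 K) ∈ Ideal.span {α} ⊔ q)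
  obtain ⟨u, rfl⟩ := Ideal.mem_span_singleton'.mp hx
  refine IsUnit.of_mul_eq_one (Ideal.Quotient.mk q u) ?_
  rw [← map_mul, ← map_one (Ideal.Quotient.mk q), ← hxy, Ideal.Quotient.eq]
  rw [show α * u - (u * α + y) = -y by ring]
  exact q.neg_mem hy

variable (hdeg : Module.finrank ℚ K = 2) (himag : ∀ v : InfinitePlace K, v.IsComplex)
include hdeg himag

/-- The weighted count of the quadratic residue classes, by Poisson summation over `a * q`. The zero
frequency gives the main term, the frequency `w` carries the exponential sum of the character
attached to `w`. -/
lemma smooth_count {ε : ℝ} (hε : 0 < ε) : ∃ C : ℝ, 0 < C ∧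
    ∀ a q : Ideal (𝓞 K), a ≠ 0 → q ≠ 0 → ∀ α : 𝓞 K, a ⊔ q = ⊤ → Ideal.span {α} ⊔ q = ⊤ →
    ∀ [Fintype (𝓞 K ⧸ q)] [Fintype (𝓞 K ⧸ q)ˣ], ∀ r δ : ℝ, 0 < r → 0 < δ →
    |(∑ ρ : (𝓞 K ⧸ q)ˣ, ∑ᶠ z : {z : 𝓞 K // z ∈ a ∧
        Ideal.Quotient.mk q z = Ideal.Quotient.mk q α * (ρ : 𝓞 K ⧸ q) ^ 2},
          smoothDiscR r δ (emb ι z)) -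
      (Real.sqrt |(discr K : ℝ)| / 2 * (Ideal.absNorm a * Ideal.absNorm q))⁻¹ *
        (Fintype.card (𝓞 K ⧸ q)ˣ * (Real.pi * r ^ 2))| ≤
      C * (Real.sqrt r * (Ideal.absNorm q : ℝ) ^ (1 / 2 + ε) * δ ^ (-(1 / 2) : ℝ)) := by
  obtain ⟨C₁, hC₁, h₁⟩ := sum_mul_decay_le ι hdeg himag hε
  obtain ⟨C₂, hC₂, h₂⟩ := sum_decay_freq_le ι hdeg himag
  set Δ := Real.sqrt |(discr K : ℝ)| / 2 with hΔ
  have hΔ0 : 0 < Δ := by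
    have : (0 : ℝ) < |(discr K : ℝ)| := abs_pos.mpr (by exact_mod_cast discr_ne_zero K)
    rw [hΔ]
    positivity
  refine ⟨8 * C₁ / Δ, by positivity, fun a q ha hq α hcop hα _ _ r δ hr hδ => ?_⟩
  have hNa : (0 : ℝ) < Ideal.absNorm a := by
    exact_mod_cast Nat.pos_of_ne_zero (mt Ideal.absNorm_eq_zero_iff.mp ha)
  have hNq : (0 : ℝ) < Ideal.absNorm q := by
    exact_mod_cast Nat.pos_of_ne_zero (mt Ideal.absNorm_eq_zero_iff.mp hq)
  have haq : a * q ≠ 0 := mul_ne_zero ha hq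
  obtain ⟨c, hc⟩ := exists_ideal_basis ι hdeg himag haq
  rw [map_mul, Nat.cast_mul, ← hΔ] at hc
  set b₀ := emb ι (c 0 : 𝓞 K)
  set b₁ := emb ι (c 1 : 𝓞 K)
  have hdet : b₀.re * b₁.im - b₀.im * b₁.re ≠ 0 := by
    rw [← abs_pos, hc]
    positivity
  have hint := inner_dualVec_int ι c hdet
  -- A representative of `1` in `a`.
  obtain ⟨e, he, f, hf, hef⟩ := Submodule.mem_sup.mp (hcop ▸ Submodule.mem_top : (1 : 𝓞 K) ∈ a ⊔ q)
  have he1 : 1 - e ∈ q := by rwa [← hef, add_sub_cancel_left]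
  have hαu := isUnit_mk hα
  have hchar : ∀ n, ∃ ψ : AddChar (𝓞 K ⧸ q) ℂ,
      (∀ x, ψ (Ideal.Quotient.mk q x) = chi (inner ℝ (emb ι (e * x)) (dualVec b₀ b₁ n))) ∧
      ∀ y, (∀ x, ψ (Ideal.Quotient.mk q y * x) = 1) →
        y ∈ freqIdeal ι a (dualVec b₀ b₁ n) := fun n => exists_char ι (hint n) he he1
  choose ψ hψ hψd using hchar
  have hqd : ∀ n, q ≤ freqIdeal ι a (dualVec b₀ b₁ n) := by
    intro n x hx y hy
    exact hint n _ (by rw [mul_comm x]; exact Ideal.mul_mem_mul hy hx)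
  have hfreq : ∀ s : Finset (Fin 2 → ℤ), 0 ∉ s → ∀ w ∈ s.image (dualVec b₀ b₁),
      w ≠ 0 ∧ q ≤ freqIdeal ι a w := by
    intro s hs w hw
    obtain ⟨n, hn, rfl⟩ := Finset.mem_image.mp hw
    exact ⟨fun h => hs (dualVec_eq_zero hdet h ▸ hn), hqd n⟩
  have hdual0 : dualVec b₀ b₁ 0 = 0 := by
    refine Complex.ext ?_ ?_ <;> simp [dualVec]
  set φ := smoothDisc r δ with hφ
  have hφle : ∀ n, n ≠ 0 → ‖𝓕 φ (dualVec b₀ b₁ n)‖ ≤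
      8 * √r * decay δ ‖dualVec b₀ b₁ n‖ := fun n hn =>
    norm_fourier_smoothDisc_le hr hδ fun h => hn (dualVec_eq_zero hdet h)
  have hsumm : Summable fun n => 𝓕 φ (dualVec b₀ b₁ n) := by
    refine Summable.of_norm (summable_of_sum_le (c := ‖𝓕 φ (dualVec b₀ b₁ 0)‖ + 8 * √r *
      (C₂ * ((Ideal.absNorm a : ℝ) * Ideal.absNorm q) * δ ^ (-(1 / 2) : ℝ)))
      (fun _ => norm_nonneg _) fun s => ?_)
    have hsub : s ⊆ insert 0 (s.erase 0) := by
      intro n hn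
      by_cases h : n = 0 <;> simp [h, hn]
    refine (Finset.sum_le_sum_of_subset_of_nonneg hsub fun _ _ _ => norm_nonneg _).trans ?_
    rw [Finset.sum_insert (by simp)]
    gcongr
    calc ∑ n ∈ s.erase 0, ‖𝓕 φ (dualVec b₀ b₁ n)‖
        ≤ ∑ n ∈ s.erase 0, 8 * √r * decay δ ‖dualVec b₀ b₁ n‖ :=
          Finset.sum_le_sum fun n hn => hφle n (Finset.ne_of_mem_erase hn)
      _ = 8 * √r * ∑ w ∈ (s.erase 0).image (dualVec b₀ b₁), decay δ ‖w‖ := by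
          rw [Finset.sum_image (f := fun w => decay δ ‖w‖) ((dualVec_injective hdet).injOn),
            Finset.mul_sum]
      _ ≤ _ := by
          gcongr
          exact h₂ a q ha hq δ hδ _ (hfreq _ (by simp))
  -- A representative in `a` of the class of `α * ρ ^ 2`.
  set zr : (𝓞 K ⧸ q)ˣ → 𝓞 K := fun ρ => e * (α * Quotient.out (ρ : 𝓞 K ⧸ q) ^ 2) with hzr
  have hout : ∀ ρ : (𝓞 K ⧸ q)ˣ, Ideal.Quotient.mk q (Quotient.out (ρ : 𝓞 K ⧸ q)) = ρ :=
    fun ρ => Quotient.out_eq _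
  have hmk1 : Ideal.Quotient.mk q e = 1 := by
    rw [← map_one (Ideal.Quotient.mk q), eq_comm, Ideal.Quotient.eq]
    exact he1
  have hzmk : ∀ ρ, Ideal.Quotient.mk q (zr ρ) =
      Ideal.Quotient.mk q α * (ρ : 𝓞 K ⧸ q) ^ 2 := by
    intro ρ
    rw [hzr, map_mul, hmk1, one_mul, map_mul, map_pow, hout]
  set D : ℝ := |b₀.re * b₁.im - b₀.im * b₁.re|⁻¹ with hD
  have hρ : ∀ ρ : (𝓞 K ⧸ q)ˣ, HasSum (fun n => (D : ℂ) *
      (chi (inner ℝ (emb ι (zr ρ)) (dualVec b₀ b₁ n)) * 𝓕 φ (dualVec b₀ b₁ n)))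
      ((∑ᶠ z : {z : 𝓞 K // z ∈ a ∧
        Ideal.Quotient.mk q z = Ideal.Quotient.mk q α * (ρ : 𝓞 K ⧸ q) ^ 2},
          smoothDiscR r δ (emb ι z) : ℝ) : ℂ) := by
    intro ρ
    rw [← hzmk, finsum_class ι hcop c (a.mul_mem_right _ he), ofReal_finsum_smoothDiscR]
    exact poisson_lattice hdet (continuous_smoothDisc hr δ) (hasCompactSupport_smoothDisc r δ) _
      hsumm
  have hsum := hasSum_sum fun ρ (_ : ρ ∈ (Finset.univ : Finset (𝓞 K ⧸ q)ˣ)) => hρ ρ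
  have hterm : (fun n => ∑ ρ : (𝓞 K ⧸ q)ˣ, (D : ℂ) *
      (chi (inner ℝ (emb ι (zr ρ)) (dualVec b₀ b₁ n)) * 𝓕 φ (dualVec b₀ b₁ n))) =
      fun n => (D : ℂ) * (squareSum (Ideal.Quotient.mk q α) (ψ n) *
        𝓕 φ (dualVec b₀ b₁ n)) := by
    funext n
    rw [← Finset.mul_sum, ← Finset.sum_mul, squareSum]
    congr 2
    refine Finset.sum_congr rfl fun ρ _ => ?_
    rw [← hψ, map_mul, map_pow, hout]
  rw [hterm, ← Complex.ofReal_sum] at hsum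
  have hzero : (D : ℂ) * (squareSum (Ideal.Quotient.mk q α) (ψ 0) * 𝓕 φ (dualVec b₀ b₁ 0)) =
      (((Δ * (Ideal.absNorm a * Ideal.absNorm q))⁻¹ *
        (Fintype.card (𝓞 K ⧸ q)ˣ * (Real.pi * r ^ 2)) : ℝ) : ℂ) := by
    have h1 : squareSum (Ideal.Quotient.mk q α) (ψ 0) = (Fintype.card (𝓞 K ⧸ q)ˣ : ℂ) := by
      have : ∀ x, ψ 0 x = 1 := by
        intro x
        obtain ⟨x, rfl⟩ := Ideal.Quotient.mk_surjective x
        rw [hψ, hdual0, inner_zero_right]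
        simpa using chi_intCast 0
      simp [squareSum, this]
    rw [h1, hdual0, hφ, fourier_smoothDisc_zero hr.le hδ, hD, hc]
    push_cast
    ring
  rw [← Real.norm_eq_abs, ← Complex.norm_real, Complex.ofReal_sub, ← hzero]
  have hlim : Filter.Tendsto (fun s : Finset (Fin 2 → ℤ) =>
      ‖∑ n ∈ s, (D : ℂ) * (squareSum (Ideal.Quotient.mk q α) (ψ n) * 𝓕 φ (dualVec b₀ b₁ n)) -
        (D : ℂ) * (squareSum (Ideal.Quotient.mk q α) (ψ 0) * 𝓕 φ (dualVec b₀ b₁ 0))‖)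
      Filter.atTop _ := (Filter.Tendsto.sub_const hsum _).norm
  refine le_of_tendsto hlim ?_
  filter_upwards [Filter.eventually_ge_atTop {0}] with s hs
  have h0s : (0 : Fin 2 → ℤ) ∈ s := hs (Finset.mem_singleton_self _)
  rw [← Finset.add_sum_erase s _ h0s, add_sub_cancel_left]
  have hD0 : 0 ≤ D := by positivity
  set S : ℂ → ℝ := fun w => if h : ∃ n, dualVec b₀ b₁ n = w then
    ‖squareSum (Ideal.Quotient.mk q α) (ψ h.choose)‖ else 0 with hS
  have hSn : ∀ n, S (dualVec b₀ b₁ n) = ‖squareSum (Ideal.Quotient.mk q α) (ψ n)‖ := by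
    intro n
    have h : ∃ n', dualVec b₀ b₁ n' = dualVec b₀ b₁ n := ⟨n, rfl⟩
    rw [hS]
    simp only [h, dite_true]
    rw [dualVec_injective hdet h.choose_spec]
  calc ‖∑ n ∈ s.erase 0, (D : ℂ) * (squareSum (Ideal.Quotient.mk q α) (ψ n) *
        𝓕 φ (dualVec b₀ b₁ n))‖
      ≤ ∑ n ∈ s.erase 0, ‖(D : ℂ) * (squareSum (Ideal.Quotient.mk q α) (ψ n) *
        𝓕 φ (dualVec b₀ b₁ n))‖ := norm_sum_le _ _
    _ ≤ ∑ n ∈ s.erase 0, D * (8 * √r) *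
          (S (dualVec b₀ b₁ n) * decay δ ‖dualVec b₀ b₁ n‖) := by
        refine Finset.sum_le_sum fun n hn => ?_
        rw [norm_mul, norm_mul, Complex.norm_real, Real.norm_of_nonneg hD0, hSn]
        have := mul_le_mul_of_nonneg_left (hφle n (Finset.ne_of_mem_erase hn))
          (norm_nonneg (squareSum (Ideal.Quotient.mk q α) (ψ n)))
        calc D * _ ≤ D * _ := mul_le_mul_of_nonneg_left this hD0
          _ = _ := by ring
    _ = D * (8 * √r) * ∑ w ∈ (s.erase 0).image (dualVec b₀ b₁), S w * decay δ ‖w‖ := by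
        rw [Finset.sum_image (f := fun w => S w * decay δ ‖w‖) ((dualVec_injective hdet).injOn),
          Finset.mul_sum]
    _ ≤ D * (8 * √r) * (C₁ * (Ideal.absNorm a * Ideal.absNorm q *
          (Ideal.absNorm q : ℝ) ^ (1 / 2 + ε)) * δ ^ (-(1 / 2) : ℝ)) := by
        refine mul_le_mul_of_nonneg_left (h₁ a q ha hq δ hδ _ (hfreq _ (by simp)) S ?_)
          (by positivity)
        intro w hw
        obtain ⟨n, hn, rfl⟩ := Finset.mem_image.mp hw
        rw [hSn]
        exact norm_squareSum_le_of_conductor hq (hqd n) hαu (ψ n) (hψd n)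
    _ = _ := by
        rw [hD, hc]
        field_simp

end SmoothCount
end QCircle

/-! ### Counting points in residue classes -/

namespace QCircle

section Counting
open Module

lemma smooth_eq_zero {r δ : ℝ} (w : ℂ) (hw : (r + δ) ^ 2 < Complex.normSq w) :
    smoothDiscR r δ w = 0 := by
  rw [Complex.normSq_eq_norm_sq] at hw
  exact smoothDiscR_eq_zero (lt_of_pow_lt_pow_left₀ 2 (norm_nonneg _) hw)

variable {K : Type*} [Field K] [NumberField K] (ι : K →+* ℂ)

/-- The number of elements of `a` in the residue class `c` modulo `q` with `|z|² ≤ t`. -/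
noncomputable def classCount (a q : Ideal (𝓞 K)) (c : 𝓞 K ⧸ q) (t : ℝ) : ℝ :=
  (Nat.card {z : 𝓞 K // z ∈ a ∧ Ideal.Quotient.mk q z = c ∧ Complex.normSq (emb ι z) ≤ t} : ℝ)

lemma card_sq_eq_le {q : Ideal (𝓞 K)} (hq : q ≠ 0) [Fintype (𝓞 K ⧸ q)ˣ] {c : 𝓞 K ⧸ q}
    (hc : IsUnit c) (v : 𝓞 K ⧸ q) :
    (Finset.univ.filter fun ρ : (𝓞 K ⧸ q)ˣ => v = c * (ρ : 𝓞 K ⧸ q) ^ 2).card ≤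
      Ideal.absNorm (Ideal.span {(2 : 𝓞 K)}) * 2 ^ omegaI q := by
  refine le_trans ?_ (card_units_sqrt_one_le hq)
  rcases Finset.eq_empty_or_nonempty
    (Finset.univ.filter fun ρ : (𝓞 K ⧸ q)ˣ => v = c * (ρ : 𝓞 K ⧸ q) ^ 2) with h | ⟨ρ₀, h₀⟩
  · rw [h]; simp
  rw [Nat.card_eq_fintype_card, Fintype.card_subtype]
  refine Finset.card_le_card_of_injOn (fun ρ => ρ * ρ₀⁻¹) ?_
    (fun x _ y _ h => mul_right_cancel h)
  intro ρ hρ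
  have h1 := (Finset.mem_filter.mp hρ).2
  have h2 := (Finset.mem_filter.mp h₀).2
  have h3 : ρ ^ 2 = ρ₀ ^ 2 := by
    apply Units.ext
    push_cast
    exact hc.mul_left_cancel (h1.symm.trans h2)
  simp [mul_pow, h3]

variable (hdeg : Module.finrank ℚ K = 2) (himag : ∀ v : InfinitePlace K, v.IsComplex)

/-- The finite set of elements of `a` with `|z|² ≤ t`. -/
noncomputable def discPts {a : Ideal (𝓞 K)} (ha : a ≠ 0) {t : ℝ} (ht : 0 ≤ t) : Finset (𝓞 K) :=
  (card_ideal_disc_le ι hdeg himag ha ht).1.toFinset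

include hdeg himag

lemma mem_discPts {a : Ideal (𝓞 K)} (ha : a ≠ 0) {t : ℝ} (ht : 0 ≤ t) {z : 𝓞 K} :
    z ∈ discPts ι hdeg himag ha ht ↔ z ∈ a ∧ Complex.normSq (emb ι z) ≤ t := by
  rw [discPts, Set.Finite.mem_toFinset]
  rfl

lemma classCount_eq {a : Ideal (𝓞 K)} (ha : a ≠ 0) {t : ℝ} (ht : 0 ≤ t) (q : Ideal (𝓞 K))
    (c : 𝓞 K ⧸ q) : classCount ι a q c t =
      (((discPts ι hdeg himag ha ht).filter fun z => Ideal.Quotient.mk q z = c).card : ℝ) := by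
  rw [classCount, Nat.subtype_card]
  intro z
  rw [Finset.mem_filter, mem_discPts]
  tauto

lemma finsum_eq_sum_discPts {a : Ideal (𝓞 K)} (ha : a ≠ 0) {t : ℝ} (ht : 0 ≤ t) (q : Ideal (𝓞 K))
    (c : 𝓞 K ⧸ q) {g : ℂ → ℝ} (hg : ∀ w, t < Complex.normSq w → g w = 0) :
    ∑ᶠ z : {z : 𝓞 K // z ∈ a ∧ Ideal.Quotient.mk q z = c}, g (emb ι z) =
      ∑ z ∈ discPts ι hdeg himag ha ht with Ideal.Quotient.mk q z = c, g (emb ι z) := by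
  rw [finsum_eq_sum_of_support_subset (s := (discPts ι hdeg himag ha ht).subtype
    fun z => z ∈ a ∧ Ideal.Quotient.mk q z = c)]
  · rw [Finset.sum_subtype_eq_sum_filter (f := fun z => g (emb ι z))]
    refine Finset.sum_congr (Finset.filter_congr fun z hz => ?_) fun _ _ => rfl
    rw [mem_discPts] at hz
    tauto
  · intro z hz
    rw [Finset.mem_coe, Finset.mem_subtype, mem_discPts]
    exact ⟨z.2.1, not_lt.mp fun h => hz (hg _ h)⟩

lemma classCount_le {a : Ideal (𝓞 K)} (ha : a ≠ 0) {R δ : ℝ} (hR : 0 ≤ R) (hδ : 0 < δ)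
    (q : Ideal (𝓞 K)) (c : 𝓞 K ⧸ q) : classCount ι a q c (R ^ 2) ≤
      ∑ᶠ z : {z : 𝓞 K // z ∈ a ∧ Ideal.Quotient.mk q z = c}, smoothDiscR (R + δ) δ (emb ι z) := by
  rw [classCount_eq ι hdeg himag ha (sq_nonneg R), finsum_eq_sum_discPts ι hdeg himag ha
    (sq_nonneg (R + δ + δ)) q c smooth_eq_zero, Finset.card_eq_sum_ones,
    Nat.cast_sum]
  refine le_trans (Finset.sum_le_sum (g := fun z => smoothDiscR (R + δ) δ (emb ι z)) ?_)
    (Finset.sum_le_sum_of_subset_of_nonneg ?_ fun _ _ _ => smoothDiscR_nonneg _ _ _)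
  · intro z hz
    rw [Finset.mem_filter, mem_discPts, Complex.normSq_eq_norm_sq] at hz
    rw [smoothDiscR_eq_one hδ]
    · simp
    · rw [add_sub_cancel_right]
      exact le_of_sq_le_sq hz.1.2 hR
  · intro z hz
    rw [Finset.mem_filter, mem_discPts] at hz ⊢
    refine ⟨⟨hz.1.1, hz.1.2.trans ?_⟩, hz.2⟩
    gcongr
    linarith

lemma le_classCount {a : Ideal (𝓞 K)} (ha : a ≠ 0) {R δ : ℝ} (hR : 0 ≤ R) (hδ : 0 < δ)
    (q : Ideal (𝓞 K)) (c : 𝓞 K ⧸ q) :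
      ∑ᶠ z : {z : 𝓞 K // z ∈ a ∧ Ideal.Quotient.mk q z = c}, smoothDiscR (R - δ) δ (emb ι z) ≤
      classCount ι a q c (R ^ 2) := by
  have h : R - δ + δ = R := by ring
  rw [classCount_eq ι hdeg himag ha (sq_nonneg R), finsum_eq_sum_discPts ι hdeg himag ha
    (sq_nonneg R) q c (fun w hw => smooth_eq_zero w (by rwa [h])),
    Finset.card_eq_sum_ones, Nat.cast_sum]
  refine Finset.sum_le_sum fun z _ => ?_
  rw [Nat.cast_one]
  exact smoothDiscR_le_one _ hδ _

/-- The trivial bound: every element of the disc is counted once for each solution `ρ` of the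
congruence `α * ρ ^ 2 = z`. -/
lemma sum_classCount_le {a q : Ideal (𝓞 K)} (ha : a ≠ 0) (hq : q ≠ 0) [Fintype (𝓞 K ⧸ q)ˣ]
    {c : 𝓞 K ⧸ q} (hc : IsUnit c) {t : ℝ} (ht : 0 ≤ t) :
    ∑ ρ : (𝓞 K ⧸ q)ˣ, classCount ι a q (c * (ρ : 𝓞 K ⧸ q) ^ 2) t ≤
      Ideal.absNorm (Ideal.span {(2 : 𝓞 K)}) * 2 ^ omegaI q * (50 * (1 + t / Ideal.absNorm a)) := by
  have h1 : ∑ ρ : (𝓞 K ⧸ q)ˣ, ((discPts ι hdeg himag ha ht).filter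
      fun z => Ideal.Quotient.mk q z = c * (ρ : 𝓞 K ⧸ q) ^ 2).card =
      ∑ z ∈ discPts ι hdeg himag ha ht, (Finset.univ.filter fun ρ : (𝓞 K ⧸ q)ˣ =>
        Ideal.Quotient.mk q z = c * (ρ : 𝓞 K ⧸ q) ^ 2).card := by
    simp_rw [Finset.card_filter]
    exact Finset.sum_comm
  have h2 := Finset.sum_le_card_nsmul (discPts ι hdeg himag ha ht) _ _ fun z _ =>
    card_sq_eq_le hq hc (Ideal.Quotient.mk q z)
  rw [← h1, smul_eq_mul] at h2
  have h3 : ((discPts ι hdeg himag ha ht).card : ℝ) ≤ 50 * (1 + t / Ideal.absNorm a) := by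
    refine le_trans (le_of_eq ?_) (card_ideal_disc_le ι hdeg himag ha ht).2
    rw [Nat.subtype_card (discPts ι hdeg himag ha ht) fun z => mem_discPts ι hdeg himag ha ht]
  simp_rw [classCount_eq ι hdeg himag ha ht]
  rw [← Nat.cast_sum]
  refine (Nat.cast_le.mpr h2).trans ?_
  push_cast
  rw [mul_comm]
  gcongr

end Counting
end QCircle

/-! ### Choice of the smoothing width -/

namespace QCircle

section Assembly
open Module

/-- The smoothing width that balances the two error terms. -/
lemma width_identities {x Q N : ℝ} (hx : 0 < x) (hQ : 0 < Q) (hN : 0 < N) {R δ : ℝ}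
    (hR : R = N ^ (1 / 2 : ℝ) * x ^ (1 / 2 : ℝ))
    (hδ : δ = N ^ (1 / 2 : ℝ) * (Q ^ (1 / 3 : ℝ) * x ^ (-(1 / 6) : ℝ))) :
    R * δ = N * (x ^ (1 / 3 : ℝ) * Q ^ (1 / 3 : ℝ)) ∧
    R ^ (1 / 2 : ℝ) * δ ^ (-(1 / 2) : ℝ) = x ^ (1 / 3 : ℝ) * Q ^ (-(1 / 6) : ℝ) := by
  constructor
  · calc R * δ = (N ^ (1 / 2 : ℝ) * N ^ (1 / 2 : ℝ)) *
        ((x ^ (1 / 2 : ℝ) * x ^ (-(1 / 6) : ℝ)) * Q ^ (1 / 3 : ℝ)) := by rw [hR, hδ]; ring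
      _ = _ := by
        rw [← Real.rpow_add hN, ← Real.rpow_add hx]
        norm_num
  · rw [hR, hδ, Real.mul_rpow (by positivity) (by positivity),
      Real.mul_rpow (by positivity) (by positivity),
      Real.mul_rpow (by positivity) (by positivity), ← Real.rpow_mul hN.le, ← Real.rpow_mul hN.le,
      ← Real.rpow_mul hx.le, ← Real.rpow_mul hx.le, ← Real.rpow_mul hQ.le]
    calc _ = (N ^ ((1 / 2 : ℝ) * (1 / 2)) * N ^ ((1 / 2 : ℝ) * -(1 / 2))) *
          ((x ^ ((1 / 2 : ℝ) * (1 / 2)) * x ^ (-(1 / 6) * -(1 / 2) : ℝ)) *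
            Q ^ ((1 / 3 : ℝ) * -(1 / 2))) := by ring
      _ = _ := by
        rw [← Real.rpow_add hN, ← Real.rpow_add hx]
        norm_num

variable {K : Type*} [Field K] [NumberField K] (ι : K →+* ℂ)
variable (hdeg : Module.finrank ℚ K = 2) (himag : ∀ v : InfinitePlace K, v.IsComplex)
include hdeg himag

set_option maxHeartbeats 800000 in
/-- For `t / N(a)` at most `N(q) ^ (1 / 2)` the trivial bound suffices. Otherwise the count is
squeezed between the smoothed counts of radii `R - δ` and `R + δ`, where `R ^ 2 = t`. -/
lemma main_estimate {ε : ℝ} (hε : 0 < ε) : ∃ C : ℝ, 0 < C ∧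
    ∀ a q : Ideal (𝓞 K), a ≠ 0 → q ≠ 0 → ∀ α : 𝓞 K, a ⊔ q = ⊤ → Ideal.span {α} ⊔ q = ⊤ →
    ∀ [Fintype (𝓞 K ⧸ q)] [Fintype (𝓞 K ⧸ q)ˣ], ∀ t : ℝ, 0 ≤ t →
    |(∑ ρ : (𝓞 K ⧸ q)ˣ, classCount ι a q (Ideal.Quotient.mk q α * (ρ : 𝓞 K ⧸ q) ^ 2) t) -
      (Real.sqrt |(discr K : ℝ)| / 2 * (Ideal.absNorm a * Ideal.absNorm q))⁻¹ *
        (Fintype.card (𝓞 K ⧸ q)ˣ * (Real.pi * t))| ≤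
      C * ((t / Ideal.absNorm a) ^ (1 / 3 : ℝ) * (Ideal.absNorm q : ℝ) ^ (1 / 3 + ε) +
        2 ^ omegaI q * (Ideal.absNorm q : ℝ) ^ (1 / 2 : ℝ)) := by
  obtain ⟨C₁, hC₁, h₁⟩ := smooth_count ι hdeg himag hε
  set Δ := Real.sqrt |(discr K : ℝ)| / 2 with hΔ
  have hΔ0 : 0 < Δ := by
    have : (0 : ℝ) < |(discr K : ℝ)| := abs_pos.mpr (by exact_mod_cast discr_ne_zero K)
    rw [hΔ]
    positivity
  set N₂ : ℝ := (Ideal.absNorm (Ideal.span {(2 : 𝓞 K)}) : ℝ) with hN₂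
  have hN₂0 : 0 ≤ N₂ := Nat.cast_nonneg _
  have hpi := Real.pi_pos
  refine ⟨3 * Real.pi / Δ + 2 * C₁ + 100 * N₂, by positivity,
    fun a q ha hq α hcop hα _ _ t ht => ?_⟩
  set N : ℝ := (Ideal.absNorm a : ℝ) with hNdef
  have hN : 0 < N := by
    rw [hNdef]
    exact_mod_cast Nat.pos_of_ne_zero (mt Ideal.absNorm_eq_zero_iff.mp ha)
  set Q : ℝ := (Ideal.absNorm q : ℝ) with hQdef
  have hQ1 : 1 ≤ Q := by
    rw [hQdef]
    exact_mod_cast Nat.pos_of_ne_zero (mt Ideal.absNorm_eq_zero_iff.mp hq)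
  have hQ0 : 0 < Q := by linarith
  set Φ : ℝ := (Fintype.card (𝓞 K ⧸ q)ˣ : ℝ) with hΦ
  have hΦ0 : 0 ≤ Φ := Nat.cast_nonneg _
  have hΦQ : Φ ≤ Q := by
    rw [hΦ, hQdef, ← card_quotient, Nat.card_eq_fintype_card]
    exact_mod_cast Fintype.card_le_of_injective _ Units.val_injective
  set x := t / N with hx
  have htx : t = N * x := by rw [hx]; field_simp
  have hx0 : 0 ≤ x := by positivity
  have hω : (1 : ℝ) ≤ 2 ^ omegaI q := one_le_pow₀ (by norm_num)
  set A := ∑ ρ : (𝓞 K ⧸ q)ˣ, classCount ι a q (Ideal.Quotient.mk q α * (ρ : 𝓞 K ⧸ q) ^ 2) t with hA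
  -- The main term is monotone in `t`, with slope at most `π / (Δ * N)`.
  have hslope : ∀ y, 0 ≤ y → (Δ * (N * Q))⁻¹ * (Φ * (Real.pi * y)) ≤ Real.pi / Δ * (y / N) := by
    intro y hy
    calc (Δ * (N * Q))⁻¹ * (Φ * (Real.pi * y)) ≤ (Δ * (N * Q))⁻¹ * (Q * (Real.pi * y)) := by gcongr
      _ = _ := by field_simp
  have hαu := isUnit_mk hα
  rcases le_or_gt x (Q ^ (1 / 2 : ℝ)) with hxQ | hxQ
  · have hA0 : 0 ≤ A := Finset.sum_nonneg fun _ _ => Nat.cast_nonneg _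
    have hA1 : A ≤ N₂ * 2 ^ omegaI q * (50 * (1 + x)) :=
      sum_classCount_le ι hdeg himag ha hq hαu ht
    have hQh : 1 ≤ Q ^ (1 / 2 : ℝ) := Real.one_le_rpow hQ1 (by norm_num)
    have hA2 : A ≤ 100 * N₂ * (2 ^ omegaI q * Q ^ (1 / 2 : ℝ)) := by
      calc A ≤ N₂ * 2 ^ omegaI q * (50 * (1 + x)) := hA1
        _ ≤ N₂ * 2 ^ omegaI q * (50 * (Q ^ (1 / 2 : ℝ) + Q ^ (1 / 2 : ℝ))) := by gcongr
        _ = _ := by ring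
    have hM0 : 0 ≤ (Δ * (N * Q))⁻¹ * (Φ * (Real.pi * t)) := by positivity
    have hM1 : (Δ * (N * Q))⁻¹ * (Φ * (Real.pi * t)) ≤
        3 * Real.pi / Δ * (2 ^ omegaI q * Q ^ (1 / 2 : ℝ)) := by
      calc _ ≤ Real.pi / Δ * x := hslope t ht
        _ ≤ Real.pi / Δ * (1 * Q ^ (1 / 2 : ℝ)) := by rw [one_mul]; gcongr
        _ ≤ Real.pi / Δ * (2 ^ omegaI q * Q ^ (1 / 2 : ℝ)) := by gcongr
        _ ≤ _ := by
          gcongr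
          linarith
    set V := (2 : ℝ) ^ omegaI q * Q ^ (1 / 2 : ℝ) with hV
    have hV0 : 0 ≤ V := by positivity
    set U := x ^ (1 / 3 : ℝ) * Q ^ (1 / 3 + ε) with hU
    have hU0 : 0 ≤ U := by positivity
    have h1 : |A - (Δ * (N * Q))⁻¹ * (Φ * (Real.pi * t))| ≤
        (3 * Real.pi / Δ + 100 * N₂) * V := by
      rw [abs_le]
      have : 0 ≤ 3 * Real.pi / Δ * V := by positivity
      have : 0 ≤ 100 * N₂ * V := by positivity
      constructor <;> linarith
    refine h1.trans ?_
    have hc : 3 * Real.pi / Δ + 100 * N₂ ≤ 3 * Real.pi / Δ + 2 * C₁ + 100 * N₂ := by linarith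
    refine mul_le_mul hc ?_ hV0 (by positivity)
    linarith
  · have hx0 : 0 < x := lt_of_le_of_lt (by positivity) hxQ
    set R := N ^ (1 / 2 : ℝ) * x ^ (1 / 2 : ℝ) with hR
    set δ := N ^ (1 / 2 : ℝ) * (Q ^ (1 / 3 : ℝ) * x ^ (-(1 / 6) : ℝ)) with hδ
    have hR0 : 0 < R := by positivity
    have hδ0 : 0 < δ := by positivity
    obtain ⟨hRδ, hRδ'⟩ := width_identities hx0 hQ0 hN hR hδ
    have hR2 : R ^ 2 = t := by
      rw [hR, mul_pow, ← Real.sqrt_eq_rpow, ← Real.sqrt_eq_rpow, Real.sq_sqrt hN.le,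
        Real.sq_sqrt hx0.le, htx]
    have hδR : δ < R := by
      rw [hδ, hR]
      gcongr
      calc Q ^ (1 / 3 : ℝ) * x ^ (-(1 / 6) : ℝ)
          = (Q ^ (1 / 2 : ℝ)) ^ (2 / 3 : ℝ) * x ^ (-(1 / 6) : ℝ) := by
            rw [← Real.rpow_mul hQ0.le]; norm_num
        _ < x ^ (2 / 3 : ℝ) * x ^ (-(1 / 6) : ℝ) := by gcongr
        _ = x ^ (1 / 2 : ℝ) := by rw [← Real.rpow_add hx0]; norm_num
    set U := x ^ (1 / 3 : ℝ) * Q ^ (1 / 3 + ε) with hU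
    have hU0 : 0 ≤ U := by positivity
    have hV0 : 0 ≤ (2 : ℝ) ^ omegaI q * Q ^ (1 / 2 : ℝ) := by positivity
    have herr : ∀ r, 0 < r → r ≤ 2 * R →
        C₁ * (Real.sqrt r * Q ^ (1 / 2 + ε) * δ ^ (-(1 / 2) : ℝ)) ≤ 2 * C₁ * U := by
      intro r hr hrR
      have hs : Real.sqrt r ≤ 2 * R ^ (1 / 2 : ℝ) := by
        rw [← Real.sqrt_eq_rpow]
        calc Real.sqrt r ≤ Real.sqrt (2 ^ 2 * R) := Real.sqrt_le_sqrt (by linarith)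
          _ = _ := by rw [Real.sqrt_mul (by norm_num), Real.sqrt_sq (by norm_num)]
      calc C₁ * (Real.sqrt r * Q ^ (1 / 2 + ε) * δ ^ (-(1 / 2) : ℝ))
          ≤ C₁ * (2 * R ^ (1 / 2 : ℝ) * Q ^ (1 / 2 + ε) * δ ^ (-(1 / 2) : ℝ)) := by gcongr
        _ = 2 * C₁ * ((R ^ (1 / 2 : ℝ) * δ ^ (-(1 / 2) : ℝ)) * Q ^ (1 / 2 + ε)) := by ring
        _ = 2 * C₁ * U := by
          rw [hRδ', hU, mul_assoc (x ^ (1 / 3 : ℝ)), ← Real.rpow_add hQ0]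
          congr 3
          ring
    have hshift : Real.pi / Δ * (3 * (R * δ) / N) ≤ 3 * Real.pi / Δ * U := by
      rw [hRδ]
      calc Real.pi / Δ * (3 * (N * (x ^ (1 / 3 : ℝ) * Q ^ (1 / 3 : ℝ))) / N)
          = 3 * Real.pi / Δ * (x ^ (1 / 3 : ℝ) * Q ^ (1 / 3 : ℝ)) := by field_simp
        _ ≤ _ := by
          rw [hU]
          gcongr
          linarith
    have hup := h₁ a q ha hq α hcop hα (R + δ) δ (by positivity) hδ0
    have hlo := h₁ a q ha hq α hcop hα (R - δ) δ (by linarith) hδ0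
    have hAup : A ≤ ∑ ρ : (𝓞 K ⧸ q)ˣ, ∑ᶠ z : {z : 𝓞 K // z ∈ a ∧
        Ideal.Quotient.mk q z = Ideal.Quotient.mk q α * (ρ : 𝓞 K ⧸ q) ^ 2},
          smoothDiscR (R + δ) δ (emb ι z) := by
      rw [hA, ← hR2]
      exact Finset.sum_le_sum fun ρ _ => classCount_le ι hdeg himag ha hR0.le hδ0 q _
    have hAlo : ∑ ρ : (𝓞 K ⧸ q)ˣ, ∑ᶠ z : {z : 𝓞 K // z ∈ a ∧
        Ideal.Quotient.mk q z = Ideal.Quotient.mk q α * (ρ : 𝓞 K ⧸ q) ^ 2},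
          smoothDiscR (R - δ) δ (emb ι z) ≤ A := by
      rw [hA, ← hR2]
      exact Finset.sum_le_sum fun ρ _ => le_classCount ι hdeg himag ha hR0.le hδ0 q _
    have e1 := herr (R + δ) (by positivity) (by linarith)
    have e2 := herr (R - δ) (by linarith) (by linarith)
    have hRR : 0 ≤ R * δ := by positivity
    have hmain : (Δ * (N * Q))⁻¹ * (Φ * (Real.pi * (3 * (R * δ)))) ≤ 3 * Real.pi / Δ * U :=
      (hslope _ (by positivity)).trans hshift
    have hk0 : 0 ≤ (Δ * (N * Q))⁻¹ * Φ * Real.pi := by positivity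
    have m1 : (Δ * (N * Q))⁻¹ * (Φ * (Real.pi * (R + δ) ^ 2)) ≤
        (Δ * (N * Q))⁻¹ * (Φ * (Real.pi * t)) + 3 * Real.pi / Δ * U := by
      have : (R + δ) ^ 2 ≤ t + 3 * (R * δ) := by rw [← hR2]; nlinarith
      have := mul_le_mul_of_nonneg_left this hk0
      linarith
    have m2 : (Δ * (N * Q))⁻¹ * (Φ * (Real.pi * t)) - 3 * Real.pi / Δ * U ≤
        (Δ * (N * Q))⁻¹ * (Φ * (Real.pi * (R - δ) ^ 2)) := by
      have : t - 3 * (R * δ) ≤ (R - δ) ^ 2 := by rw [← hR2]; nlinarith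
      have := mul_le_mul_of_nonneg_left this hk0
      linarith
    rw [abs_le] at hup hlo
    have hfin : |A - (Δ * (N * Q))⁻¹ * (Φ * (Real.pi * t))| ≤
        (3 * Real.pi / Δ + 2 * C₁) * U := by
      rw [abs_le]
      constructor
      · linarith [hlo.1]
      · linarith [hup.2]
    refine hfin.trans ?_
    have hc : 3 * Real.pi / Δ + 2 * C₁ ≤ 3 * Real.pi / Δ + 2 * C₁ + 100 * N₂ := by linarith
    refine mul_le_mul hc ?_ hU0 (by positivity)
    linarith

end Assembly
end QCircle

/-- Theorem 1.2, the circle problem over quadratic residues: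
`∑_{ρ mod q, (ρ,q)=1} #{z ∈ a : z ≡ αρ² mod q, |z|² ≤ t}
  = 2π φ*(q) t / (√|Δ_K| N(a)) + O_ε((t/N(a))^{1/3} N(q)^{1/3+ε} + 2^{ω(q)} N(q)^{1/2})`. -/
theorem stmt_4 {K : Type*} [Field K] [NumberField K] (ι : K →+* ℂ)
    (hdeg : Module.finrank ℚ K = 2)
    (himag : ∀ v : NumberField.InfinitePlace K, v.IsComplex)
    (ε : ℝ) (hε : 0 < ε) :
    ∃ C : ℝ, 0 < C ∧ ∀ (a q : Ideal (𝓞 K)), a ≠ 0 → q ≠ 0 → ∀ α : 𝓞 K,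
      a ⊔ q = ⊤ → Ideal.span {α} ⊔ q = ⊤ → ∀ t : ℝ, 0 ≤ t →
      |(∑ᶠ ρ : (𝓞 K ⧸ q)ˣ,
            (Nat.card {z : 𝓞 K // z ∈ a ∧
                Ideal.Quotient.mk q z = Ideal.Quotient.mk q α * (ρ : 𝓞 K ⧸ q) ^ 2 ∧
                Complex.normSq (ι (algebraMap (𝓞 K) K z)) ≤ t} : ℝ)) -
          2 * Real.pi * ((Nat.card (𝓞 K ⧸ q)ˣ : ℝ) / (Ideal.absNorm q : ℝ)) /
            (Real.sqrt |(NumberField.discr K : ℝ)| * (Ideal.absNorm a : ℝ)) * t|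
        ≤ C * ((t / (Ideal.absNorm a : ℝ)) ^ ((1 : ℝ) / 3) *
              (Ideal.absNorm q : ℝ) ^ ((1 : ℝ) / 3 + ε) +
            2 ^ omegaI q * (Ideal.absNorm q : ℝ) ^ ((1 : ℝ) / 2)) := by
  obtain ⟨C, hC, h⟩ := QCircle.main_estimate ι hdeg himag hε
  refine ⟨C, hC, fun a q ha hq α hcop hα t ht => ?_⟩
  have := QCircle.finite_quotient hq
  have := Fintype.ofFinite (𝓞 K ⧸ q)
  have := Fintype.ofFinite (𝓞 K ⧸ q)ˣ
  have h1 := h a q ha hq α hcop hα t ht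
  rw [finsum_eq_sum_of_fintype, Nat.card_eq_fintype_card]
  refine le_trans (le_of_eq ?_) h1
  congr 2
  have hN : (Ideal.absNorm a : ℝ) ≠ 0 := Nat.cast_ne_zero.mpr (mt Ideal.absNorm_eq_zero_iff.mp ha)
  have hQ : (Ideal.absNorm q : ℝ) ≠ 0 := Nat.cast_ne_zero.mpr (mt Ideal.absNorm_eq_zero_iff.mp hq)
  have hΔ : Real.sqrt |(NumberField.discr K : ℝ)| ≠ 0 := by
    have : (0 : ℝ) < |(NumberField.discr K : ℝ)| :=
      abs_pos.mpr (by exact_mod_cast NumberField.discr_ne_zero K)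
    exact (Real.sqrt_pos.mpr this).ne'
  field_simp
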